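/- Let H be a connected finite simple graph with maximum degree Δ(H) ≥ 5, and let p ≥ 3 and q ≥ 3 be integers with ω(H) = p and p + q = Δ(H) + 1. Then there exists a subset V_1 ⊆ V(H) such that V_1 is a K_p-free subset of V(H) of maximum cardinality and the induced subgraph H[V(H) ∖ V_1] is K_q-free. -/

import Mathlib

set_option linter.unusedSectionVars false
namespace TC
variable {V : Type*} [DecidableEq V] {G : SimpleGraph V}

def Mono (G : SimpleGraph V) (φ : V → Bool) (a b c : V) : Prop :=
  G.Adj a b ∧ G.Adj a c ∧ G.Adj b c ∧ φ a = φ b ∧ φ a = φ c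

def Core (G : SimpleGraph V) (φ : V → Bool) (c : V) : Prop :=
  ∀ x y z, Mono G φ x y z → c = x ∨ c = y ∨ c = z

def flip (c : V) (φ : V → Bool) : V → Bool := fun v => if v = c then !φ v else φ v

theorem flip_same (c : V) (φ : V → Bool) : flip c φ c = !φ c := by simp [flip]
theorem flip_ne {c v : V} (φ : V → Bool) (h : v ≠ c) : flip c φ v = φ v := by simp [flip, h]

structure Ctx (G : SimpleGraph V) (P : (V → Bool) → Prop) : Prop where
  k4 : ∀ a b c d, G.Adj a b → G.Adj a c → G.Adj a d → G.Adj b c → G.Adj b d → G.Adj c d → False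
  deg : ∀ v a b c d e, G.Adj v a → G.Adj v b → G.Adj v c → G.Adj v d → G.Adj v e →
    a ≠ b → a ≠ c → a ≠ d → a ≠ e → b ≠ c → b ≠ d → b ≠ e → c ≠ d → c ≠ e → d ≠ e →
    ∀ x, G.Adj v x → x = a ∨ x = b ∨ x = c ∨ x = d ∨ x = e
  p1 : ∀ φ, P φ → ∃ a b c, Mono G φ a b c
  p2 : ∀ φ c, P φ → Core G φ c → P (flip c φ)
  p3 : ∀ φ, P φ → ∃ c, Core G φ c

variable {P : (V → Bool) → Prop}

theorem core_mono (C : Ctx G P) {φ c} (h : P φ) (hc : Core G φ c) :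
    ∃ a b, G.Adj c a ∧ G.Adj c b ∧ G.Adj a b ∧ φ a = φ c ∧ φ b = φ c := by
  obtain ⟨x, y, z, hm⟩ := C.p1 φ h
  obtain ⟨h1, h2, h3, h4, h5⟩ := hm
  rcases hc x y z ⟨h1, h2, h3, h4, h5⟩ with rfl | rfl | rfl
  · exact ⟨y, z, h1, h2, h3, h4.symm, h5.symm⟩
  · exact ⟨x, z, h1.symm, h3, h2, h4, h4 ▸ h5.symm⟩
  · exact ⟨x, y, h2.symm, h3.symm, h1, h5, h4 ▸ h5⟩

theorem core_flip {φ c} (hc : Core G φ c) : Core G (flip c φ) c := by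
  intro x y z hm
  by_contra hcon
  push Not at hcon
  obtain ⟨n1, n2, n3⟩ := hcon
  have := hc x y z (by
    simp only [Mono, flip_ne φ n1.symm, flip_ne φ n2.symm, flip_ne φ n3.symm] at hm
    exact hm)
  tauto

theorem block (C : Ctx G P) {φ c} (h : P φ) (hc : Core G φ c) :
    ∃ a b, G.Adj c a ∧ G.Adj c b ∧ G.Adj a b ∧ φ a = !φ c ∧ φ b = !φ c := by
  obtain ⟨a, b, h1, h2, h3, h4, h5⟩ := core_mono C (C.p2 φ c h hc) (core_flip hc)
  rw [flip_ne φ h1.ne', flip_same] at h4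
  rw [flip_ne φ h2.ne', flip_same] at h5
  exact ⟨a, b, h1, h2, h3, h4, h5⟩

theorem core_of_nbr {φ : V → Bool} {y w : V} (hy : Core G φ y)
    (h : ∀ a b, G.Adj y a → G.Adj y b → G.Adj a b → φ a = φ y → φ b = φ y → w = y ∨ w = a ∨ w = b) :
    Core G φ w := by
  intro x1 x2 x3 hm
  obtain ⟨h1, h2, h3, h4, h5⟩ := hm
  rcases hy x1 x2 x3 ⟨h1, h2, h3, h4, h5⟩ with rfl | rfl | rfl
  · exact h _ _ h1 h2 h3 h4.symm h5.symm
  · have := h _ _ h1.symm h3 h2 h4 (h4 ▸ h5.symm); tauto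
  · have := h _ _ h2.symm h3.symm h1 h5 (h4 ▸ h5); tauto

structure Walk (G : SimpleGraph V) (P : (V → Bool) → Prop) (φ : ℕ → V → Bool) (c : ℕ → V) (k : ℕ) : Prop where
  start : P (φ 0)
  core : ∀ n, n < k → Core G (φ n) (c n)
  step : ∀ n, n < k → φ (n+1) = flip (c n) (φ n)
  inj : ∀ i j, i < k → j < k → c i = c j → i = j

variable {φ : ℕ → V → Bool} {c : ℕ → V} {k : ℕ}

theorem Walk.hP (C : Ctx G P) (W : Walk G P φ c k) : ∀ n, n ≤ k → P (φ n) := by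
  intro n
  induction n with
  | zero => intro _; exact W.start
  | succ n ih =>
    intro h
    rw [W.step n h]
    exact C.p2 _ _ (ih (by omega)) (W.core n h)

theorem Walk.core_succ (W : Walk G P φ c k) {n} (h : n < k) : Core G (φ (n+1)) (c n) := by
  rw [W.step n h]; exact core_flip (W.core n h)

theorem Walk.unfl (W : Walk G P φ c k) {v : V} : ∀ n, n ≤ k → (∀ i, i < n → c i ≠ v) → φ n v = φ 0 v := by
  intro n
  induction n with
  | zero => intros; rfl
  | succ n ih =>
    intro h h2
    rw [W.step n h, flip_ne _ (h2 n (by omega)).symm]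
    exact ih (by omega) (fun i hi => h2 i (by omega))

theorem Walk.before (W : Walk G P φ c k) {n i} (hn : n ≤ i) (hi : i < k) : φ n (c i) = φ 0 (c i) := by
  apply W.unfl n (by omega)
  intro j hj h
  have := W.inj j i (by omega) hi h
  omega

theorem Walk.after (W : Walk G P φ c k) {i} : ∀ n, i < n → n ≤ k → φ n (c i) = !φ 0 (c i) := by
  intro n
  induction n with
  | zero => intro h; omega
  | succ n ih =>
    intro h h2
    rw [W.step n h2]
    by_cases hin : i = n
    · subst hin
      rw [flip_same, W.before le_rfl h2]
    · rw [flip_ne, ih (by omega) (by omega)]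
      intro h3
      have := W.inj i n (by omega) (by omega) h3
      omega

theorem Walk.allflip (W : Walk G P φ c (k+1)) {i j} (hij : i < j) (hj : j < k)
    (hm : Mono G (φ (k+1)) (c i) (c j) (c k)) : i = 0 ∧ Mono G (φ 0) (c i) (c j) (c k) := by
  obtain ⟨h1, h2, h3, h4, h5⟩ := hm
  rw [W.after (k+1) (by omega) le_rfl, W.after (k+1) (by omega) le_rfl] at h4 h5
  have h0 : Mono G (φ 0) (c i) (c j) (c k) := ⟨h1, h2, h3, by simpa using h4, by simpa using h5⟩
  refine ⟨?_, h0⟩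
  by_contra hi
  obtain ⟨l, rfl⟩ : ∃ l, i = l+1 := ⟨i-1, by omega⟩
  have hm : Mono G (φ (l+1)) (c (l+1)) (c j) (c k) := by
    refine ⟨h1, h2, h3, ?_, ?_⟩
    · rw [W.before le_rfl (by omega), W.before (n := l+1) (i := j) (by omega) (by omega)]; exact h0.2.2.2.1
    · rw [W.before le_rfl (by omega), W.before (n := l+1) (i := k) (by omega) (by omega)]; exact h0.2.2.2.2
  rcases W.core_succ (n := l) (by omega) _ _ _ hm with h | h | h
  · have := W.inj _ _ (by omega) (by omega) h; omega
  · have := W.inj _ _ (by omega) (by omega) h; omega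
  · have := W.inj _ _ (by omega) (by omega) h; omega
end TC

set_option linter.unusedSectionVars false
namespace TC
variable {V : Type*} [DecidableEq V] {G : SimpleGraph V}
variable {P : (V → Bool) → Prop}
variable {φ : ℕ → V → Bool} {c : ℕ → V} {k : ℕ}

set_option maxHeartbeats 2000000 in
theorem Walk.s3 (C : Ctx G P) (W : Walk G P φ c (k+1)) {i : ℕ} (hi : i < k) {g h : V}
    (hgh : g ≠ h) (hg : ∀ j, j < k+1 → c j ≠ g) (hh : ∀ j, j < k+1 → c j ≠ h)
    (m1 : Mono G (φ (k+1)) (c k) (c i) g) (m2 : Mono G (φ (k+1)) (c k) (c i) h) : False := by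
  have sym : ∀ a b, G.Adj a b → G.Adj b a := fun a b h => h.symm
  have irr : ∀ a, ¬ G.Adj a a := fun a h => G.loopless.irrefl a h
  obtain ⟨yF, yg, Fg, ce1, ce2⟩ := m1
  obtain ⟨-, yh, Fh, -, ce3⟩ := m2
  have ngh : ¬ G.Adj g h := fun h' => C.k4 _ _ _ _ yF yg yh Fg Fh h'
  obtain ⟨κ, hκ⟩ : ∃ κ, κ = φ (k+1) (c k) := ⟨_, rfl⟩
  have yk1 : φ (k+1) (c k) = κ := hκ.symm
  have y0 : φ 0 (c k) = !κ := by
    have := W.after (i := k) (k+1) (by omega) le_rfl; rw [yk1] at this; simp [this]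
  have yn : ∀ n, n ≤ k → φ n (c k) = !κ := fun n hn => (W.before hn (by omega)).trans y0
  have F0 : φ 0 (c i) = !κ := by
    have := W.after (i := i) (k+1) (by omega) le_rfl; rw [← ce1, yk1] at this; simp [this]
  have Fn : ∀ n, n ≤ i → φ n (c i) = !κ := fun n hn => (W.before hn (by omega)).trans F0
  have Fn' : ∀ n, i < n → n ≤ k+1 → φ n (c i) = κ := fun n hn hn' => by
    rw [W.after n hn hn', F0]; simp
  have gn : ∀ n, n ≤ k+1 → φ n g = κ := fun n hn => by
    rw [W.unfl n hn (fun j hj => hg j (by omega)), ← W.unfl (k+1) le_rfl hg, ← ce2, yk1]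
  have hn : ∀ n, n ≤ k+1 → φ n h = κ := fun n hn => by
    rw [W.unfl n hn (fun j hj => hh j (by omega)), ← W.unfl (k+1) le_rfl hh, ← ce3, yk1]
  obtain ⟨e1, he1⟩ : ∃ e1, e1 = c (i+1) := ⟨_, rfl⟩
  have Pi1 := W.hP C (i+1) (by omega)
  have Pi := W.hP C i (by omega)
  have ce := W.core (i+1) (by omega)
  have cF := W.core_succ (n := i) (by omega)
  rw [← he1] at ce
  obtain ⟨g', hg', Fe, eg', Fg', ceq, cgq⟩ : ∃ g', φ (i+1) g' = κ ∧ G.Adj (c i) e1 ∧ G.Adj e1 g' ∧ G.Adj (c i) g' ∧ φ (i+1) e1 = κ ∧ True := by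
    obtain ⟨a, b, h1, h2, h3, h4, h5⟩ := core_mono C Pi1 cF
    have hF := Fn' (i+1) (by omega) (by omega)
    have hne : e1 ≠ c i := by
      rw [he1]; intro h; have := W.inj _ _ (by omega) (by omega) h; omega
    rcases ce (c i) a b ⟨h1, h2, h3, h4.symm, h5.symm⟩ with h | h | h
    · exact absurd h hne
    · subst h; exact ⟨b, by rw [h5, hF], h1, h3, h2, by rw [h4, hF], trivial⟩
    · subst h; exact ⟨a, by rw [h4, hF], h2, h3.symm, h1, by rw [h5, hF], trivial⟩
  have e0 : φ 0 e1 = κ := by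
    rw [he1, ← W.before (n := i+1) (i := i+1) le_rfl (by omega), ← he1, ceq]
  have ei : φ i e1 = κ := by rw [he1, W.before (by omega) (by omega), ← he1, e0]
  have ney : e1 ≠ c k := by intro h; rw [h, y0] at e0; simp at e0
  have neg : e1 ≠ g := by rw [he1]; exact hg _ (by omega)
  have neh : e1 ≠ h := by rw [he1]; exact hh _ (by omega)
  have gi := gn i (by omega)
  have hi' := hn i (by omega)
  have yi := yn i (by omega)
  have Fi := Fn i le_rfl
  have kne : κ ≠ !κ := by simp
  have ci := W.core i (by omega)
  have ngy : g ≠ c k := yg.ne'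
  have nhy : h ≠ c k := yh.ne'
  obtain ⟨u, Fu, uy, hu, nuy⟩ : ∃ u, G.Adj (c i) u ∧ G.Adj u (c k) ∧ φ i u = !κ ∧ u ≠ c k := by
    obtain ⟨a, b, h1, h2, h3, h4, h5⟩ := core_mono C Pi ci
    have := C.deg (c i) g h e1 a b Fg Fh Fe h1 h2 (by grind) (by grind) (by grind) (by grind) (by grind) (by grind) (by grind) (by grind) (by grind) h3.ne (c k) yF.symm
    have : c k = a ∨ c k = b := by grind
    rcases this with rfl | rfl
    · exact ⟨b, h2, h3.symm, by rw [h5, Fi], h3.ne'⟩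
    · exact ⟨a, h1, h3, by rw [h4, Fi], h3.ne⟩
  have NF := C.deg (c i) (c k) g h e1 u yF.symm Fg Fh Fe Fu (by grind) (by grind) (by grind) (by grind) (by grind) (by grind) (by grind) (by grind) (by grind) (by grind)
  have coy : Core G (φ i) (c k) := core_of_nbr ci (by
    intro a b h1 h2 h3 h4 h5
    have := NF a h1; have := NF b h2
    grind)
  have cou : Core G (φ i) u := core_of_nbr ci (by
    intro a b h1 h2 h3 h4 h5
    have := NF a h1; have := NF b h2
    grind)
  have hg'2 : g' = g ∨ g' = h := by
    have := NF g' Fg'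
    have h1 := yn (i+1) (by omega)
    have h2 : φ (i+1) u = !κ := by
      rw [W.step i (by omega), flip_ne _ Fu.ne', hu]
    grind
  have Pk := W.hP C k (by omega)
  have ck := W.core k (by omega)
  have uk : u ≠ c (k-1) ∨ φ k u = κ := by
    by_contra hc
    push Not at hc
    obtain ⟨h1, h2⟩ := hc
    have h3 := W.before (n := i) (i := k-1) (by omega) (by omega)
    have h4 := W.after (i := k-1) k (by omega) (by omega)
    rw [← h1] at h3 h4
    rw [hu] at h3
    rw [← h3, Bool.not_not] at h4
    exact h2 h4
  obtain ⟨w, yw, uw, hwk, hw, huk⟩ : ∃ w, G.Adj (c k) w ∧ G.Adj u w ∧ φ k w = !κ ∧ w = c (k-1) ∧ φ k u = !κ := by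
    obtain ⟨a, b, h1, h2, h3, h4, h5⟩ := core_mono C Pk ck
    have hF := Fn' k (by omega) (by omega)
    have hgk := gn k (by omega)
    have hhk := hn k (by omega)
    have hy := yn k (by omega)
    have := C.deg (c k) (c i) g h a b yF yg yh h1 h2 (by grind) (by grind) (by grind) (by grind) (by grind) (by grind) (by grind) (by grind) (by grind) h3.ne u uy.symm
    have h6 : u = a ∨ u = b := by grind
    have cs := W.core_succ (n := k-1) (by omega)
    rw [show k - 1 + 1 = k by omega] at cs
    have h7 := cs _ _ _ ⟨h1, h2, h3, h4.symm, h5.symm⟩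
    have h8 : c (k-1) ≠ c k := by intro h; have := W.inj _ _ (by omega) (by omega) h; omega
    rcases h6 with rfl | rfl
    · exact ⟨b, h2, h3, by grind, by grind, by grind⟩
    · exact ⟨a, h1, h3.symm, by grind, by grind, by grind⟩
  have nwF : w ≠ c i := by
    intro h; have hF := Fn' k (by omega) (by omega); rw [← h] at hF; grind
  have wi : φ i w = κ := by
    have h3 := W.before (n := i) (i := k-1) (by omega) (by omega)
    have h4 := W.after (i := k-1) k (by omega) (by omega)
    rw [← hw] at h3 h4
    rw [hwk] at h4
    rw [h3]; simpa using h4.symm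
  have nFw : ¬ G.Adj (c i) w := fun h' => C.k4 (c i) (c k) u w yF.symm Fu h' uy.symm yw uw
  have nwe : w ≠ e1 := by grind
  have nug : ¬ G.Adj u g := fun h' => C.k4 (c i) (c k) u g yF.symm Fu Fg uy.symm yg h'
  have nuh : ¬ G.Adj u h := fun h' => C.k4 (c i) (c k) u h yF.symm Fu Fh uy.symm yh h'
  have NY := C.deg (c k) (c i) u g h w yF uy.symm yg yh yw (by grind) (by grind) (by grind) (by grind) (by grind) (by grind) (by grind) (by grind) (by grind) (by grind)
  have nye : ¬ G.Adj (c k) e1 := by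
    intro h'; have := NY e1 h'; grind
  have wk1 : φ (k+1) w = !κ := by rw [W.step k (by omega), flip_ne _ yw.ne', hwk]
  have uk1 : φ (k+1) u = !κ := by rw [W.step k (by omega), flip_ne _ nuy, huk]
  have coF : Core G (φ (k+1)) (c i) := core_of_nbr (W.core_succ (n := k) (by omega)) (by
    intro a b h1 h2 h3 h4 h5
    have := NY a h1; have := NY b h2
    grind)
  have ue : G.Adj u e1 := by
    obtain ⟨a, b, h1, h2, h3, h4, h5⟩ := block C (W.hP C (k+1) le_rfl) coF
    have := NF a h1; have := NF b h2
    have := gn (k+1) le_rfl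
    have := hn (k+1) le_rfl
    grind
  have wi1 : φ (i+1) w = κ := by rw [W.step i (by omega), flip_ne _ nwF, wi]
  have ui1 : φ (i+1) u = !κ := by rw [W.step i (by omega), flip_ne _ Fu.ne', hu]
  have Fi1 := Fn' (i+1) (by omega) (by omega)
  have nug' : ¬ G.Adj u g' := by rcases hg'2 with rfl | rfl <;> assumption
  have blkE : ∀ x, G.Adj e1 x → G.Adj u x → φ (i+1) x = κ → x ≠ c i →
      ∃ y1, y1 ≠ u ∧ G.Adj e1 y1 ∧ G.Adj u y1 ∧ φ (i+1) y1 = !κ := by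
    intro x ex ux hx nx
    obtain ⟨a, b, h1, h2, h3, h4, h5⟩ := block C Pi1 ce
    have := C.deg e1 (c i) g' x a b Fe.symm eg' ex h1 h2 (by grind) (by grind) (by grind) (by grind) (by grind) (by grind) (by grind) (by grind) (by grind) h3.ne u ue.symm
    have h6 : u = a ∨ u = b := by grind
    rcases h6 with rfl | rfl
    · exact ⟨b, h3.ne', h2, h3, by grind⟩
    · exact ⟨a, h3.ne, h1, h3.symm, by grind⟩
  obtain ⟨ψ, hψ⟩ : ∃ ψ, ψ = flip (c k) (φ i) := ⟨_, rfl⟩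
  have Pψ : P ψ := hψ ▸ C.p2 _ _ Pi coy
  have ψy : ψ (c k) = κ := by rw [hψ, flip_same, yi]; simp
  have ψn : ∀ v, v ≠ c k → ψ v = φ i v := fun v hv => by rw [hψ, flip_ne _ hv]
  have cyψ : Core G ψ (c k) := hψ ▸ core_flip coy
  have ψF := ψn (c i) yF.ne'
  have ψg := ψn g ngy
  have ψh := ψn h nhy
  have ψu := ψn u nuy
  have ψw := ψn w yw.ne'
  have cwψ : Core G ψ w := core_of_nbr cyψ (by
    intro a b h1 h2 h3 h4 h5
    have := NY a h1; have := NY b h2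
    grind)
  have blkW : ∀ x, G.Adj w x → G.Adj u x → ψ x = κ → x ≠ c k →
      ∃ y1, y1 ≠ u ∧ G.Adj w y1 ∧ G.Adj u y1 ∧ ψ y1 = !κ := by
    intro x ex ux hx nx
    obtain ⟨g'', wg'', yg'', hg''⟩ : ∃ g'', G.Adj w g'' ∧ (g'' = g ∨ g'' = h) ∧ ψ g'' = κ := by
      obtain ⟨a, b, h1, h2, h3, h4, h5⟩ := core_mono C Pψ cyψ
      have := NY a h1; have := NY b h2
      grind
    obtain ⟨a, b, h1, h2, h3, h4, h5⟩ := block C Pψ cwψ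
    have := C.deg w (c k) g'' x a b yw.symm wg'' ex h1 h2 (by grind) (by grind) (by grind) (by grind) (by grind) (by grind) (by grind) (by grind) (by grind) h3.ne u uw.symm
    have h6 : u = a ∨ u = b := by grind
    rcases h6 with rfl | rfl
    · exact ⟨b, h3.ne', h2, h3, by grind⟩
    · exact ⟨a, h3.ne, h1, h3.symm, by grind⟩
  have main : ∀ v5, G.Adj u v5 → v5 ≠ c i → v5 ≠ c k → v5 ≠ e1 → v5 ≠ w →
      ∀ x, G.Adj u x → x = c i ∨ x = c k ∨ x = e1 ∨ x = w ∨ x = v5 := by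
    intro v5 h1 h2 h3 h4 h5
    exact C.deg u (c i) (c k) e1 w v5 Fu.symm uy ue uw h1 yF.ne' Fe.ne nwF.symm h2.symm ney.symm yw.ne h3.symm nwe.symm h4.symm h5.symm
  have fini : ∀ x, x ≠ c i → φ (i+1) x = φ i x := fun x hx => by rw [W.step i (by omega), flip_ne _ hx]
  have case1 : ∀ v5, G.Adj u v5 → v5 ≠ w → φ i v5 = κ → G.Adj e1 v5 → False := by
    intro v5 h1 h2 h3 h4
    have n1 : v5 ≠ c i := by grind
    have n2 : v5 ≠ c k := by grind
    have NU := main v5 h1 n1 n2 h4.ne' h2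
    obtain ⟨y1, q1, q2, q3, q4⟩ := blkE v5 h4 h1 (by rw [fini _ n1, h3]) n1
    have := NU y1 q3
    have := fini v5 n1
    grind
  have case2 : ∀ v5, G.Adj u v5 → v5 ≠ e1 → φ i v5 = κ → G.Adj w v5 → False := by
    intro v5 h1 h2 h3 h4
    have n1 : v5 ≠ c i := by grind
    have n2 : v5 ≠ c k := by grind
    have NU := main v5 h1 n1 n2 h2 h4.ne'
    obtain ⟨y1, q1, q2, q3, q4⟩ := blkW v5 h4 h1 (by rw [ψn _ n2, h3]) n2
    have := NU y1 q3
    have := ψn v5 n2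
    have := ψn e1 ney
    grind
  have case3 : G.Adj e1 w → False := by
    intro h4
    obtain ⟨y1, q1, q2, q3, q4⟩ := blkE w h4 uw wi1 nwF
    obtain ⟨y2, r1, r2, r3, r4⟩ := blkW e1 h4.symm ue (by rw [ψn _ ney, ei]) ney
    have n1 : y1 ≠ c i := by grind
    have n2 : y1 ≠ c k := by grind
    have NU := main y1 q3 n1 n2 q2.ne' (by grind)
    have := NU y2 r3
    have := ψn e1 ney
    have e : y2 = y1 := by grind
    rw [e] at r2
    exact C.k4 u e1 w y1 ue uw q3 h4 q2 r2
  obtain ⟨a, b, h1, h2, h3, h4, h5⟩ := block C Pi cou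
  rw [hu, Bool.not_not] at h4 h5
  by_cases ha : a = e1
  · subst ha
    by_cases hb : b = w
    · subst hb; exact case3 h3
    · exact case1 b h2 hb h5 h3
  by_cases hb : b = e1
  · subst hb
    by_cases ha : a = w
    · subst ha; exact case3 h3.symm
    · exact case1 a h1 ha h4 h3.symm
  by_cases ha' : a = w
  · subst ha'; exact case2 b h2 hb h5 h3
  by_cases hb' : b = w
  · subst hb'; exact case2 a h1 ha h4 h3.symm
  have NU := main a h1 (by grind) (by grind) ha ha'
  have := NU b h2
  grind
end TC

set_option linter.unusedSectionVars false
namespace TC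
variable {V : Type*} [DecidableEq V] {G : SimpleGraph V}
variable {P : (V → Bool) → Prop}
variable {φ : ℕ → V → Bool} {c : ℕ → V} {k : ℕ}

theorem Walk.allflip' (W : Walk G P φ c (k+1)) {i j} (hij : i ≠ j) (hi : i < k) (hj : j < k)
    (hm : Mono G (φ (k+1)) (c i) (c j) (c k)) : ∃ l, 0 < l ∧ l < k ∧ Mono G (φ 0) (c 0) (c l) (c k) := by
  rcases lt_or_gt_of_ne hij with h | h
  · obtain ⟨rfl, h2⟩ := W.allflip h hj hm
    exact ⟨j, h, hj, h2⟩
  · obtain ⟨h1, h2, h3, h4, h5⟩ := hm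
    obtain ⟨rfl, h2⟩ := W.allflip h hi ⟨h1.symm, h3, h2, h4.symm, h4 ▸ h5⟩
    exact ⟨i, h, hi, h2⟩

set_option maxHeartbeats 1000000 in
theorem Walk.ext (C : Ctx G P) (W : Walk G P φ c (k+1)) :
    (∃ v, Core G (φ (k+1)) v ∧ ∀ j, j < k+1 → c j ≠ v) ∨
    (∃ l, 0 < l ∧ l < k ∧ Mono G (φ 0) (c 0) (c l) (c k)) := by
  by_contra hcon
  push Not at hcon
  obtain ⟨hc1, hc2⟩ := hcon
  have Pk := W.hP C (k+1) le_rfl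
  have cy := W.core_succ (n := k) (by omega)
  obtain ⟨o1, o2, yo1, yo2, o12, co1, co2⟩ := core_mono C (W.hP C k (by omega)) (W.core k (by omega))
  have hy : φ (k+1) (c k) = !φ k (c k) := by rw [W.step k (by omega), flip_same]
  have ho1 : φ (k+1) o1 = !φ (k+1) (c k) := by
    rw [hy, Bool.not_not, W.step k (by omega), flip_ne _ yo1.ne', co1]
  have ho2 : φ (k+1) o2 = !φ (k+1) (c k) := by
    rw [hy, Bool.not_not, W.step k (by omega), flip_ne _ yo2.ne', co2]
  have key : ∀ a b, G.Adj (c k) a → G.Adj (c k) b → G.Adj a b → φ (k+1) a = φ (k+1) (c k) →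
      φ (k+1) b = φ (k+1) (c k) → (∀ j, j < k+1 → c j ≠ a) ∨ (∀ j, j < k+1 → c j ≠ b) := by
    intro a b h1 h2 h3 h4 h5
    by_contra hcon
    push Not at hcon
    obtain ⟨⟨i, hi, rfl⟩, ⟨j, hj, rfl⟩⟩ := hcon
    have hik : i ≠ k := by rintro rfl; exact G.loopless.irrefl _ h1
    have hjk : j ≠ k := by rintro rfl; exact G.loopless.irrefl _ h2
    have hij : i ≠ j := by rintro rfl; exact G.loopless.irrefl _ h3
    obtain ⟨l, hl⟩ := W.allflip' hij (by omega) (by omega) ⟨h3, h1.symm, h2.symm, by rw [h4, h5], h4⟩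
    exact hc2 l hl.1 hl.2.1 hl.2.2
  have nc : ∀ f, (∀ j, j < k+1 → c j ≠ f) → ∃ a b, G.Adj (c k) a ∧ G.Adj (c k) b ∧ G.Adj a b ∧
      φ (k+1) a = φ (k+1) (c k) ∧ φ (k+1) b = φ (k+1) (c k) ∧ a ≠ f ∧ b ≠ f := by
    intro f hf
    by_contra hcon
    push Not at hcon
    obtain ⟨j, hj, hj2⟩ := hc1 f (core_of_nbr cy (by
      intro a b h1 h2 h3 h4 h5
      by_cases h : a = f
      · exact Or.inr (Or.inl h.symm)
      · exact Or.inr (Or.inr (hcon a b h1 h2 h3 h4 h5 h).symm)))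
    exact hf j hj hj2
  have fin : ∀ f g, G.Adj (c k) f → G.Adj (c k) g → G.Adj f g → φ (k+1) f = φ (k+1) (c k) →
      φ (k+1) g = φ (k+1) (c k) → (∀ j, j < k+1 → c j ≠ f) → False := by
    intro f g h1 h2 h3 h4 h5 hf
    have third : ∀ z a, z ≠ a → (z = f ∨ z = g) → (a = f ∨ a = g) → ∀ a1 b1, G.Adj (c k) a1 → G.Adj (c k) b1 →
        G.Adj a1 b1 → φ (k+1) a1 = φ (k+1) (c k) → φ (k+1) b1 = φ (k+1) (c k) → a1 ≠ z → b1 ≠ z →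
        ∃ h, G.Adj (c k) h ∧ G.Adj a h ∧ h ≠ z ∧ φ (k+1) h = φ (k+1) (c k) := by
      intro z a hza hz ha a1 b1 q1 q2 q3 q4 q5 q6 q7
      have hz1 : G.Adj (c k) z ∧ φ (k+1) z = φ (k+1) (c k) := by rcases hz with rfl | rfl <;> tauto
      have ha1 : G.Adj (c k) a ∧ φ (k+1) a = φ (k+1) (c k) := by rcases ha with rfl | rfl <;> tauto
      have n1 : o1 ≠ a1 := by intro h; rw [h, q4] at ho1; simp at ho1
      have n2 : o1 ≠ b1 := by intro h; rw [h, q5] at ho1; simp at ho1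
      have n3 : o2 ≠ a1 := by intro h; rw [h, q4] at ho2; simp at ho2
      have n4 : o2 ≠ b1 := by intro h; rw [h, q5] at ho2; simp at ho2
      have n5 : o1 ≠ z := by intro h; rw [h, hz1.2] at ho1; simp at ho1
      have n6 : o2 ≠ z := by intro h; rw [h, hz1.2] at ho2; simp at ho2
      have n7 : o1 ≠ a := by intro h; rw [h, ha1.2] at ho1; simp at ho1
      have n8 : o2 ≠ a := by intro h; rw [h, ha1.2] at ho2; simp at ho2
      have := C.deg (c k) o1 o2 z a1 b1 yo1 yo2 hz1.1 q1 q2 o12.ne n5 n1 n2 n6 n3 n4 q6.symm q7.symm q3.ne a ha1.1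
      have : a = a1 ∨ a = b1 := by grind
      rcases this with rfl | rfl
      · exact ⟨b1, q2, q3, q7, q5⟩
      · exact ⟨a1, q1, q3.symm, q6, q4⟩
    obtain ⟨a, b, q1, q2, q3, q4, q5, q6, q7⟩ := nc f hf
    obtain ⟨h, yh, gh, hf', ch⟩ := third f g h3.ne (Or.inl rfl) (Or.inr rfl) a b q1 q2 q3 q4 q5 q6 q7
    have nfh : ¬ G.Adj f h := fun h' => C.k4 _ _ _ _ h1 h2 yh h3 h' gh
    have hgf : ¬ (∀ j, j < k+1 → c j ≠ g) := by
      intro hg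
      obtain ⟨a, b, q1, q2, q3, q4, q5, q6, q7⟩ := nc g hg
      obtain ⟨h0, yh0, fh0, hg0, ch0⟩ := third g f h3.ne' (Or.inr rfl) (Or.inl rfl) a b q1 q2 q3 q4 q5 q6 q7
      have hne : h0 ≠ h := by rintro rfl; exact nfh fh0
      have n1 : o1 ≠ f := by intro h; rw [h, h4] at ho1; simp at ho1
      have n2 : o1 ≠ g := by intro h; rw [h, h5] at ho1; simp at ho1
      have n3 : o2 ≠ f := by intro h; rw [h, h4] at ho2; simp at ho2
      have n4 : o2 ≠ g := by intro h; rw [h, h5] at ho2; simp at ho2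
      have n5 : o1 ≠ h := by intro h; rw [h, ch] at ho1; simp at ho1
      have n6 : o2 ≠ h := by intro h; rw [h, ch] at ho2; simp at ho2
      have n7 : o1 ≠ h0 := by intro h; rw [h, ch0] at ho1; simp at ho1
      have n8 : o2 ≠ h0 := by intro h; rw [h, ch0] at ho2; simp at ho2
      have := C.deg (c k) o1 o2 f g h yo1 yo2 h1 h2 yh o12.ne n1 n2 n5 n3 n4 n6 h3.ne hf'.symm gh.ne h0 yh0
      have := fh0.ne
      grind
    push Not at hgf
    obtain ⟨i, hi, rfl⟩ := hgf
    have hik : i ≠ k := by rintro rfl; exact G.loopless.irrefl _ h2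
    rcases key _ _ h2 yh gh h5 ch with h' | h'
    · exact h' i hi rfl
    · exact W.s3 C (i := i) (by omega) hf'.symm hf h' ⟨h2, h1, h3.symm, h5.symm, h4.symm⟩
        ⟨h2, yh, gh, h5.symm, ch.symm⟩
  obtain ⟨a, b, h1, h2, h3, h4, h5⟩ := core_mono C Pk cy
  rcases key a b h1 h2 h3 h4 h5 with h | h
  · exact fin a b h1 h2 h3 h4 h5 h
  · exact fin b a h2 h1 h3.symm h5 h4 h

theorem Walk.le_card [Fintype V] (W : Walk G P φ c k) : k ≤ Fintype.card V := by
  have : Function.Injective (fun i : Fin k => c i) := by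
    intro i j h
    exact Fin.ext (W.inj i j i.2 j.2 h)
  simpa using Fintype.card_le_of_injective _ this

theorem Walk.stuck [Fintype V] (C : Ctx G P) (W : Walk G P φ c (k+1)) :
    ∃ (t : ℕ) (φ' : ℕ → V → Bool) (c' : ℕ → V), k ≤ t ∧ Walk G P φ' c' (t+1) ∧
      (∀ n, n ≤ k+1 → φ' n = φ n) ∧ (∀ n, n < k+1 → c' n = c n) ∧
      ∃ l, 0 < l ∧ l < t ∧ Mono G (φ' 0) (c' 0) (c' l) (c' t) := by
  obtain ⟨N, hN⟩ : ∃ N, N = Fintype.card V - k := ⟨_, rfl⟩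
  induction N generalizing k φ c with
  | zero =>
    have := W.le_card
    omega
  | succ N ih =>
    rcases W.ext C with ⟨v, hv, hv2⟩ | h
    · have W' : Walk G P (fun n => if n = k+2 then flip v (φ (k+1)) else φ n)
          (fun n => if n = k+1 then v else c n) (k+1+1) := by
        refine ⟨?_, ?_, ?_, ?_⟩
        · simpa using W.start
        · intro n hn
          by_cases h : n = k+1
          · subst h; simpa using hv
          · have h2 : n ≠ k+2 := by omega
            simp only [h, h2, if_false]; exact W.core n (by omega)
        · intro n hn
          by_cases h : n = k+1
          · subst h; simp
          · have h2 : n ≠ k+2 := by omega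
            have h3 : n + 1 ≠ k+2 := by omega
            simp only [h, h2, h3, if_false]; exact W.step n (by omega)
        · intro i j hi hj h
          by_cases h1 : i = k+1 <;> by_cases h2 : j = k+1
          · omega
          · simp only [h1, h2, if_true, if_false] at h; exact absurd h.symm (hv2 j (by omega))
          · simp only [h1, h2, if_true, if_false] at h; exact absurd h (hv2 i (by omega))
          · simp only [h1, h2, if_false] at h; exact W.inj i j (by omega) (by omega) h
      obtain ⟨t, φ', c', h1, h2, h3, h4, h5⟩ := ih W' (by have := W'.le_card; omega)
      refine ⟨t, φ', c', by omega, h2, ?_, ?_, h5⟩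
      · intro n hn
        rw [h3 n (by omega)]
        have : n ≠ k+2 := by omega
        simp [this]
      · intro n hn
        rw [h4 n (by omega)]
        have : n ≠ k+1 := by omega
        simp [this]
    · exact ⟨k, φ, c, le_rfl, W, fun _ _ => rfl, fun _ _ => rfl, h⟩

theorem Walk.mid (C : Ctx G P) {t j : ℕ} (W : Walk G P φ c (t+1)) (hj : j + 1 < t)
    (hm : Mono G (φ 0) (c 0) (c (j+1)) (c t)) {κ : Bool} (hκ : φ 0 (c 0) = κ) :
    G.Adj (c (j+1)) (c j) ∧ G.Adj (c (j+1)) (c (j+2)) ∧ φ 0 (c j) = (!κ) ∧ φ 0 (c (j+2)) = (!κ) ∧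
    c j ≠ c (j+2) ∧
    ∃ σ τ, G.Adj (c (j+1)) σ ∧ G.Adj (c j) σ ∧ φ (j+1) σ = κ ∧
      (σ = c t ∨ (σ ≠ c 0 ∧ σ ≠ c t ∧ σ ≠ c j ∧ σ ≠ c (j+2))) ∧
      G.Adj (c (j+1)) τ ∧ G.Adj (c (j+2)) τ ∧ φ (j+2) τ = (!κ) ∧
      (τ = c 0 ∨ (τ ≠ c 0 ∧ τ ≠ c t ∧ τ ≠ c j ∧ τ ≠ c (j+2))) ∧ (σ = c t ∨ τ = c 0) := by
  obtain ⟨h1, h2, h3, h4, h5⟩ := hm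
  rw [hκ] at h4 h5
  have Cj := W.core_succ (n := j) (by omega)
  have Cj1 := W.core (j+1) (by omega)
  have Cj1' := W.core_succ (n := j+1) (by omega)
  have Cj2 := W.core (j+2) (by omega)
  have Pj := W.hP C (j+1) (by omega)
  have Pj2 := W.hP C (j+2) (by omega)
  have b1 : φ (j+1) (c (j+1)) = κ := by rw [W.before le_rfl (by omega), ← h4]
  have b2 : φ (j+2) (c (j+1)) = !κ := by rw [W.after (j+2) (by omega) (by omega), ← h4]
  have nj : c j ≠ c (j+1) := by intro h; have := W.inj _ _ (by omega) (by omega) h; omega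
  have nj2 : c (j+2) ≠ c (j+1) := by intro h; have := W.inj _ _ (by omega) (by omega) h; omega
  have njj : c j ≠ c (j+2) := by intro h; have := W.inj _ _ (by omega) (by omega) h; omega
  obtain ⟨σ, a1, a2, a3, a4, a5⟩ : ∃ σ, G.Adj (c (j+1)) (c j) ∧ G.Adj (c (j+1)) σ ∧ G.Adj (c j) σ ∧
      φ (j+1) (c j) = κ ∧ φ (j+1) σ = κ := by
    obtain ⟨a, b, q1, q2, q3, q4, q5⟩ := core_mono C Pj Cj1
    rw [b1] at q4 q5
    rcases Cj _ _ _ ⟨q1, q2, q3, by rw [b1, q4], by rw [b1, q5]⟩ with h | h | h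
    · exact absurd h nj
    · subst h; exact ⟨b, q1, q2, q3, q4, q5⟩
    · subst h; exact ⟨a, q2, q1, q3.symm, q5, q4⟩
  obtain ⟨τ, d1, d2, d3, d4, d5⟩ : ∃ τ, G.Adj (c (j+1)) (c (j+2)) ∧ G.Adj (c (j+1)) τ ∧ G.Adj (c (j+2)) τ ∧
      φ (j+2) (c (j+2)) = (!κ) ∧ φ (j+2) τ = !κ := by
    obtain ⟨a, b, q1, q2, q3, q4, q5⟩ := core_mono C Pj2 Cj1'
    rw [b2] at q4 q5
    rcases Cj2 _ _ _ ⟨q1, q2, q3, by rw [b2, q4], by rw [b2, q5]⟩ with h | h | h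
    · exact absurd h nj2
    · subst h; exact ⟨b, q1, q2, q3, q4, q5⟩
    · subst h; exact ⟨a, q2, q1, q3.symm, q5, q4⟩
  have e1 : φ 0 (c j) = !κ := by
    have := W.after (i := j) (j+1) (by omega) (by omega); rw [a4] at this; simp [this]
  have e2 : φ 0 (c (j+2)) = !κ := by rw [← W.before (n := j+2) le_rfl (by omega), d4]
  have e3 : φ (j+1) (c 0) = !κ := by rw [W.after (j+1) (by omega) (by omega), hκ]
  have e4 : φ (j+1) (c (j+2)) = !κ := by rw [W.before (by omega) (by omega), e2]
  have e5 : φ (j+2) (c t) = κ := by rw [W.before (by omega) (by omega), ← h5]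
  have e6 : φ (j+2) (c j) = κ := by rw [W.after _ (by omega) (by omega), e1, Bool.not_not]
  have kne : κ ≠ !κ := by simp
  have n0 : c j ≠ c 0 := by grind
  have nt : c (j+2) ≠ c t := by grind
  have n1 : c j ≠ c t := by grind
  have n2 : c (j+2) ≠ c 0 := by grind
  have n3 : c 0 ≠ c t := h2.ne
  have s1 : σ ≠ c 0 := by grind
  have s2 : σ ≠ c (j+2) := by grind
  have s3 : σ ≠ c j := a3.ne'
  have t1 : τ ≠ c t := by grind
  have t2 : τ ≠ c j := by grind
  have t3 : τ ≠ c (j+2) := d3.ne'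
  refine ⟨a1, d1, e1, e2, njj, σ, τ, a2, a3, a5, by tauto, d2, d3, d5, by tauto, ?_⟩
  by_contra hcon
  push Not at hcon
  have := C.deg _ _ _ _ _ _ h1.symm h3 a1 d1 a2 n3 n0.symm n2.symm s1.symm n1.symm nt.symm hcon.1.symm njj s3.symm s2.symm τ d2
  have hτ : φ (j+2) σ = κ := by rw [W.step _ (by omega), flip_ne _ a2.ne', a5]
  grind
end TC

set_option linter.unusedSectionVars false
namespace TC
open Classical in
noncomputable def sameN {V : Type*} [Fintype V] (G : SimpleGraph V) (φ : V → Bool) (c : V) : ℕ :=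
  (Finset.univ.filter (fun x => G.Adj c x ∧ φ x = φ c)).card
open Classical in
noncomputable def oppN {V : Type*} [Fintype V] (G : SimpleGraph V) (φ : V → Bool) (c : V) : ℕ :=
  (Finset.univ.filter (fun x => G.Adj c x ∧ φ x = !φ c)).card
open Classical in
noncomputable def mu {V : Type*} [Fintype V] (G : SimpleGraph V) (φ : V → Bool) : ℕ :=
  (Finset.univ.filter (fun x : V × V => G.Adj x.1 x.2 ∧ φ x.1 = φ x.2)).card

variable {V : Type*} [DecidableEq V] [Fintype V] {G : SimpleGraph V}
variable {P : (V → Bool) → Prop}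

open Classical in
theorem mu_split (φ : V → Bool) (c : V) : mu G φ =
    (Finset.univ.filter (fun x : V × V => x.1 ≠ c ∧ x.2 ≠ c ∧ G.Adj x.1 x.2 ∧ φ x.1 = φ x.2)).card
     + 2 * sameN G φ c := by
  have e1 : (Finset.univ.filter (fun x : V × V => x.1 = c ∧ G.Adj x.1 x.2 ∧ φ x.1 = φ x.2)).card = sameN G φ c := by
    unfold sameN
    apply Finset.card_bij' (fun x _ => x.2) (fun y _ => (c, y))
    all_goals simp
    all_goals grind [SimpleGraph.adj_comm]
  have e2 : (Finset.univ.filter (fun x : V × V => x.2 = c ∧ G.Adj x.1 x.2 ∧ φ x.1 = φ x.2)).card = sameN G φ c := by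
    unfold sameN
    apply Finset.card_bij' (fun x _ => x.1) (fun y _ => (y, c))
    all_goals simp
    all_goals grind [SimpleGraph.adj_comm]
  unfold mu
  rw [two_mul]
  nth_rewrite 1 [← e1]
  rw [← e2, ← Finset.card_union_of_disjoint, ← Finset.card_union_of_disjoint]
  · congr 1
    ext ⟨a, b⟩
    simp
    tauto
  · rw [Finset.disjoint_left]
    rintro ⟨a, b⟩ h
    simp at h ⊢
    tauto
  · rw [Finset.disjoint_left]
    rintro ⟨a, b⟩ h
    simp at h ⊢
    rintro h4
    obtain ⟨rfl, h2, h3⟩ := h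
    subst h4
    exact absurd h2 (G.loopless.irrefl _)

theorem mu_flip (φ : V → Bool) (c : V) :
    mu G (flip c φ) + 2 * sameN G φ c = mu G φ + 2 * oppN G φ c := by
  classical
  rw [mu_split φ c, mu_split (flip c φ) c]
  have e1 : sameN G (flip c φ) c = oppN G φ c := by
    unfold sameN oppN
    congr 1
    ext x
    simp only [Finset.mem_filter, Finset.mem_univ, true_and]
    constructor
    · rintro ⟨h1, h2⟩; rw [flip_ne _ h1.ne', flip_same] at h2; exact ⟨h1, h2⟩
    · rintro ⟨h1, h2⟩; rw [flip_ne _ h1.ne', flip_same]; exact ⟨h1, h2⟩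
  have e2 : (Finset.univ.filter (fun x : V × V => x.1 ≠ c ∧ x.2 ≠ c ∧ G.Adj x.1 x.2 ∧ flip c φ x.1 = flip c φ x.2)).card = (Finset.univ.filter (fun x : V × V => x.1 ≠ c ∧ x.2 ≠ c ∧ G.Adj x.1 x.2 ∧ φ x.1 = φ x.2)).card := by
    congr 1
    ext ⟨a, b⟩
    simp only [Finset.mem_filter, Finset.mem_univ, true_and]
    constructor
    · rintro ⟨h1, h2, h3, h4⟩; rw [flip_ne _ h1, flip_ne _ h2] at h4; exact ⟨h1, h2, h3, h4⟩
    · rintro ⟨h1, h2, h3, h4⟩; refine ⟨h1, h2, h3, ?_⟩; rw [flip_ne _ h1, flip_ne _ h2, h4]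
  rw [e1, e2]; ring

theorem same_le {φ : V → Bool} {c : V} {S : Finset V} (h : ∀ x, G.Adj c x → φ x = φ c → x ∈ S) :
    sameN G φ c ≤ S.card := by
  unfold sameN
  apply Finset.card_le_card
  intro x hx
  simp at hx
  exact h x hx.1 hx.2

theorem le_opp {φ : V → Bool} {c : V} {S : Finset V} (h : ∀ x ∈ S, G.Adj c x ∧ φ x = !φ c) :
    S.card ≤ oppN G φ c := by
  unfold oppN
  apply Finset.card_le_card
  intro x hx
  simp
  exact h x hx

structure Max (G : SimpleGraph V) (P : (V → Bool) → Prop) (φ : V → Bool) : Prop where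
  hP : P φ
  max : ∀ ψ, P ψ → mu G ψ ≤ mu G φ

theorem exists_max {φ : V → Bool} (h : P φ) : ∃ ψ, Max G P ψ := by
  obtain ⟨ψ, h1, h2⟩ := Set.exists_max_image {φ | P φ} (mu G) (Set.toFinite _) ⟨φ, h⟩
  exact ⟨ψ, h1, h2⟩

theorem Max.opp (C : Ctx G P) {φ : V → Bool} (M : Max G P φ) {c p q : V} (hc : Core G φ c)
    (hp : G.Adj c p) (hq : G.Adj c q) (hpq : p ≠ q) (ep : φ p = !φ c) (eq : φ q = !φ c) :
    ∀ x, G.Adj c x → φ x = (!φ c) → x = p ∨ x = q := by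
  intro x hx ex
  by_contra hcon
  push Not at hcon
  obtain ⟨a, b, h1, h2, h3, h4, h5⟩ := core_mono C M.hP hc
  have kne : φ c ≠ !φ c := by simp
  have N := C.deg c p q x a b hp hq hx h1 h2 hpq hcon.1.symm (by grind) (by grind) hcon.2.symm (by grind) (by grind)
    (by grind) (by grind) h3.ne
  have s1 : sameN G φ c ≤ ({a, b} : Finset V).card := same_le (by
    intro y hy ey
    have := N y hy
    simp; grind)
  have s2 : ({a, b} : Finset V).card ≤ 2 := Finset.card_le_two
  have s3 : ({p, q, x} : Finset V).card ≤ oppN G φ c := le_opp (by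
    intro y hy; simp at hy; rcases hy with rfl | rfl | rfl <;> tauto)
  have s4 : ({p, q, x} : Finset V).card = 3 := Finset.card_eq_three.2 ⟨p, q, x, hpq, hcon.1.symm, hcon.2.symm, rfl⟩
  have := mu_flip (G := G) φ c
  have := M.max _ (C.p2 φ c M.hP hc)
  omega

theorem core_adj (C : Ctx G P) {φ : V → Bool} (h : P φ) {a b : V} (ha : Core G φ a) (hb : Core G φ b) (hab : a ≠ b) :
    G.Adj a b ∧ φ a = φ b := by
  obtain ⟨x, y, h1, h2, h3, h4, h5⟩ := core_mono C h ha
  rcases hb _ _ _ ⟨h1, h2, h3, h4.symm, h5.symm⟩ with h | h | h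
  · exact absurd h.symm hab
  · subst h; exact ⟨h1, h4.symm⟩
  · subst h; exact ⟨h2, h5.symm⟩

theorem L1core (C : Ctx G P) {φ : V → Bool} (h : P φ) {a b w : V} (ha : Core G φ a) (hb : Core G φ b) (hab : a ≠ b)
    (aw : G.Adj a w) (bw : G.Adj b w) (ew : φ w = !φ a)
    (wa : Core G (flip a φ) w) (wb : Core G (flip b φ) w) : False := by
  obtain ⟨ab, eab⟩ := core_adj C h ha hb hab
  have kne : φ a ≠ !φ a := by simp
  have part : ∀ a, Core G φ a → G.Adj a w → φ w = (!φ a) → Core G (flip a φ) w → 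
      ∃ w', G.Adj a w' ∧ G.Adj w w' ∧ φ w' = !φ a := by
    intro a ha aw ew wa
    obtain ⟨x, y, h1, h2, h3, h4, h5⟩ := core_mono C (C.p2 _ _ h ha) (core_flip ha)
    have h4' := h4; have h5' := h5
    rw [flip_same, flip_ne _ h1.ne'] at h4
    rw [flip_same, flip_ne _ h2.ne'] at h5
    rcases wa _ _ _ ⟨h1, h2, h3, h4'.symm, h5'.symm⟩ with h | h | h
    · exact absurd h aw.ne'
    · subst h; exact ⟨y, h2, h3, h5⟩
    · subst h; exact ⟨x, h1, h3.symm, h4⟩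
  obtain ⟨w1, q1, q2, q3⟩ := part a ha aw ew wa
  obtain ⟨w2, r1, r2, r3⟩ := part b hb bw (eab ▸ ew) wb
  rw [← eab] at r3
  have nw : w1 ≠ w2 := by rintro rfl; exact C.k4 _ _ _ _ ab aw q1 bw r1 q2
  have blk : ∀ a b, Core G φ a → G.Adj a b → φ a = φ b → G.Adj a w → G.Adj b w → φ w = (!φ a) → Core G (flip a φ) w → 
      φ w1 = (!φ a) → φ w2 = (!φ a) → ∃ x, G.Adj w x ∧ G.Adj b x ∧ φ x = φ b ∧ x ≠ a := by
    intro a b ha ab eab aw bw ew wa e1 e2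
    have kne : φ a ≠ !φ a := by simp
    obtain ⟨x, y, h1, h2, h3, h4, h5⟩ := block C (C.p2 _ _ h ha) wa
    rw [flip_ne _ aw.ne', ew, Bool.not_not] at h4 h5
    have nx : x ≠ a := by rintro rfl; rw [flip_same] at h4; simp at h4
    have ny : y ≠ a := by rintro rfl; rw [flip_same] at h5; simp at h5
    rw [flip_ne _ nx] at h4
    rw [flip_ne _ ny] at h5
    have := C.deg w a w1 w2 x y aw.symm q2 r2 h1 h2 (by grind) (by grind) nx.symm ny.symm nw (by grind) (by grind)
      (by grind) (by grind) h3.ne b bw.symm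
    have : b = x ∨ b = y := by have := ab.ne; grind
    rcases this with rfl | rfl
    · exact ⟨y, h2, h3, by grind, ny⟩
    · exact ⟨x, h1, h3.symm, by grind, nx⟩
  obtain ⟨x, x1, x2, x3, x4⟩ := blk a b ha ab eab aw bw ew wa q3 r3
  obtain ⟨y, y1, y2, y3, y4⟩ := blk b a hb ab.symm eab.symm bw aw (eab ▸ ew) wb (eab ▸ q3) (eab ▸ r3)
  have := C.deg w a b w1 w2 x aw.symm bw.symm q2 r2 x1 hab (by grind) (by grind) x4.symm (by grind) (by grind)
    x2.ne nw (by grind) (by grind) y y1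
  have : y = x := by have := y2.ne; grind
  subst this
  exact C.k4 _ _ _ _ ab aw y2 bw x2 y1

theorem Max.flip_core (C : Ctx G P) {φ : V → Bool} (M : Max G P φ) {a w : V} (ha : Core G φ a)
    (aw : G.Adj a w) (ew : φ w = !φ a) : Core G (flip a φ) w := by
  apply core_of_nbr (core_flip ha)
  intro x y h1 h2 h3 h4 h5
  rw [flip_same, flip_ne _ h1.ne'] at h4
  rw [flip_same, flip_ne _ h2.ne'] at h5
  have := M.opp C ha h1 h2 h3.ne h4 h5 w aw ew
  tauto

theorem Max.L1 (C : Ctx G P) {φ : V → Bool} (M : Max G P φ) {a b w : V} (ha : Core G φ a) (hb : Core G φ b) (hab : a ≠ b)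
    (aw : G.Adj a w) (bw : G.Adj b w) (ew : φ w = !φ a) : False := by
  have := core_adj C M.hP ha hb hab
  exact L1core C M.hP ha hb hab aw bw ew (M.flip_core C ha aw ew) (M.flip_core C hb bw (this.2 ▸ ew))

structure Dbl (G : SimpleGraph V) (P : (V → Bool) → Prop) (φ : V → Bool) (f v g h p q x y : V) : Prop where
  M : Max G P φ
  cf : Core G φ f
  cv : Core G φ v
  fv : G.Adj f v
  fg : G.Adj f g
  fh : G.Adj f h
  vg : G.Adj v g
  vh : G.Adj v h
  ev : φ v = φ f
  eg : φ g = φ f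
  eh : φ h = φ f
  gh : g ≠ h
  ngh : ¬ G.Adj g h
  fp : G.Adj f p
  fq : G.Adj f q
  pq : G.Adj p q
  ep : φ p = !φ f
  eq : φ q = !φ f
  vx : G.Adj v x
  vy : G.Adj v y
  xy : G.Adj x y
  ex : φ x = !φ f
  ey : φ y = !φ f
  nf : ∀ z, G.Adj f z → z = v ∨ z = g ∨ z = h ∨ z = p ∨ z = q
  nv : ∀ z, G.Adj v z → z = f ∨ z = g ∨ z = h ∨ z = x ∨ z = y
  vp : ¬ G.Adj v p
  vq : ¬ G.Adj v q
  fx : ¬ G.Adj f x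
  fy : ¬ G.Adj f y

theorem Dbl.mk' (C : Ctx G P) {φ : V → Bool} {f v g h p q : V} (M : Max G P φ) (cf : Core G φ f) (cv : Core G φ v)
    (fv : G.Adj f v) (fg : G.Adj f g) (fh : G.Adj f h) (vg : G.Adj v g) (vh : G.Adj v h)
    (ev : φ v = φ f) (eg : φ g = φ f) (eh : φ h = φ f) (gh : g ≠ h)
    (fp : G.Adj f p) (fq : G.Adj f q) (pq : G.Adj p q) (ep : φ p = !φ f) (eq : φ q = !φ f) :
    ∃ x y, Dbl G P φ f v g h p q x y := by
  obtain ⟨x, y, vx, vy, xy, ex, ey⟩ := block C M.hP cv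
  rw [ev] at ex ey
  have kne : φ f ≠ !φ f := by simp
  refine ⟨x, y, M, cf, cv, fv, fg, fh, vg, vh, ev, eg, eh, gh, fun h' => C.k4 _ _ _ _ fv fg fh vg vh h', fp, fq, pq, ep, eq,
    vx, vy, xy, ex, ey, ?_, ?_, ?_, ?_, ?_, ?_⟩
  · exact C.deg f v g h p q fv fg fh fp fq vg.ne vh.ne (by grind) (by grind) gh (by grind) (by grind) (by grind) (by grind) pq.ne
  · exact C.deg v f g h x y fv.symm vg vh vx vy fg.ne fh.ne (by grind) (by grind) gh (by grind) (by grind) (by grind) (by grind) xy.ne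
  · intro h'; exact M.L1 C cf cv fv.ne fp h' ep
  · intro h'; exact M.L1 C cf cv fv.ne fq h' eq
  · intro h'; exact M.L1 C cf cv fv.ne h' vx ex
  · intro h'; exact M.L1 C cf cv fv.ne h' vy ey

theorem Dbl.swapfv {φ : V → Bool} {f v g h p q x y : V} (D : Dbl G P φ f v g h p q x y) :
    Dbl G P φ v f g h x y p q := by
  obtain ⟨M, cf, cv, fv, fg, fh, vg, vh, ev, eg, eh, gh, ngh, fp, fq, pq, ep, eq, vx, vy, xy, ex, ey, nf, nv, vp, vq, fx, fy⟩ := D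
  constructor <;> first | assumption | (simp only [ev]; assumption) | exact fv.symm | exact ev.symm
theorem Dbl.swapgh {φ : V → Bool} {f v g h p q x y : V} (D : Dbl G P φ f v g h p q x y) :
    Dbl G P φ f v h g p q x y := by
  obtain ⟨M, cf, cv, fv, fg, fh, vg, vh, ev, eg, eh, gh, ngh, fp, fq, pq, ep, eq, vx, vy, xy, ex, ey, nf, nv, vp, vq, fx, fy⟩ := D
  constructor <;> first | assumption | exact gh.symm | (intro h; exact ngh h.symm) | (intro z hz; have := nf z hz; tauto) | (intro z hz; have := nv z hz; tauto)
theorem Dbl.swappq {φ : V → Bool} {f v g h p q x y : V} (D : Dbl G P φ f v g h p q x y) :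
    Dbl G P φ f v g h q p x y := by
  obtain ⟨M, cf, cv, fv, fg, fh, vg, vh, ev, eg, eh, gh, ngh, fp, fq, pq, ep, eq, vx, vy, xy, ex, ey, nf, nv, vp, vq, fx, fy⟩ := D
  constructor <;> first | assumption | exact pq.symm | (intro z hz; have := nf z hz; tauto)
theorem Dbl.swapxy {φ : V → Bool} {f v g h p q x y : V} (D : Dbl G P φ f v g h p q x y) :
    Dbl G P φ f v g h p q y x := D.swapfv.swappq.swapfv

theorem dbl_of_noncore (C : Ctx G P) {φ : V → Bool} (M : Max G P φ) {f v g : V} (cf : Core G φ f)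
    (fv : G.Adj f v) (fg : G.Adj f g) (vg : G.Adj v g) (ev : φ v = φ f) (eg : φ g = φ f) (ng : ¬ Core G φ g) :
    ∃ h p q x y, Dbl G P φ f v g h p q x y := by
  obtain ⟨p, q, fp, fq, pq, ep, eq⟩ := block C M.hP cf
  have kne : φ f ≠ !φ f := by simp
  obtain ⟨a, b, h1, h2, h3, h4, h5, h6, h7⟩ : ∃ a b, G.Adj f a ∧ G.Adj f b ∧ G.Adj a b ∧ φ a = φ f ∧ φ b = φ f ∧ a ≠ g ∧ b ≠ g := by
    by_contra hcon
    push Not at hcon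
    apply ng
    apply core_of_nbr cf
    intro a b h1 h2 h3 h4 h5
    by_cases h : a = g
    · exact Or.inr (Or.inl h.symm)
    · exact Or.inr (Or.inr (hcon a b h1 h2 h3 h4 h5 h).symm)
  have := C.deg f g a b p q fg h1 h2 fp fq h6.symm h7.symm (by grind) (by grind) h3.ne (by grind) (by grind) (by grind) (by grind) pq.ne v fv
  have nvg := vg.ne
  have hv : v = a ∨ v = b := by grind
  obtain ⟨h, fh, vh, eh, hg⟩ : ∃ h, G.Adj f h ∧ G.Adj v h ∧ φ h = φ f ∧ h ≠ g := by
    rcases hv with rfl | rfl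
    · exact ⟨b, h2, h3, h5, h7⟩
    · exact ⟨a, h1, h3.symm, h4, h6⟩
  have ngh : ¬ G.Adj g h := fun h' => C.k4 _ _ _ _ fv fg fh vg vh h'
  have nf := C.deg f v g h p q fv fg fh fp fq vg.ne vh.ne (by grind) (by grind) hg.symm (by grind) (by grind) (by grind) (by grind) pq.ne
  have cv : Core G φ v := by
    apply core_of_nbr cf
    intro a b h1 h2 h3 h4 h5
    have := nf a h1; have := nf b h2
    have := h3.ne
    have := h3.symm
    grind
  obtain ⟨x, y, D⟩ := Dbl.mk' C M cf cv fv fg fh vg vh ev eg eh hg.symm fp fq pq ep eq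
  exact ⟨h, p, q, x, y, D⟩

theorem walk_one {φ : V → Bool} (h : P φ) {f : V} (cf : Core G φ f) :
    Walk G P (fun n => if n = 0 then φ else flip f φ) (fun _ => f) 1 := by
  refine ⟨by simpa using h, ?_, ?_, ?_⟩
  · intro n hn
    have : n = 0 := by omega
    subst this; simpa using cf
  · intro n hn
    have : n = 0 := by omega
    subst this; simp
  · intros; omega

theorem Max.dbl (C : Ctx G P) {φ : V → Bool} (M : Max G P φ) : ∃ f v g h p q x y, Dbl G P φ f v g h p q x y := by
  obtain ⟨f, cf⟩ := C.p3 φ M.hP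
  obtain ⟨t, φ', c', -, W, hφ, hc, l, hl1, hl2, hm⟩ := (walk_one M.hP cf).stuck C (k := 0)
  have e0 := hφ 0 (by omega)
  have ec := hc 0 (by omega)
  simp at e0 ec
  obtain ⟨j, rfl⟩ : ∃ j, l = j+1 := ⟨l-1, by omega⟩
  obtain ⟨d1, d2, d3, d4, d5, σ, τ, s1, s2, s3, s4, t1, t2, t3, t4, h⟩ := W.mid C hl2 hm rfl
  obtain ⟨h1, h2, h3, h4, h5⟩ := hm
  rw [e0, ec] at h4 h5 d3 d4
  rw [ec] at h1 h2 h
  by_cases n1 : Core G φ (c' (j+1))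
  · by_cases n2 : Core G φ (c' t)
    · exfalso
      rcases h with rfl | rfl
      · exact M.L1 C n1 n2 h3.ne d1 s2.symm (by rw [d3, h4])
      · exact M.L1 C n1 cf h1.ne' d2 t2.symm (by rw [d4, h4])
    · obtain ⟨h, p, q, x, y, D⟩ := dbl_of_noncore C M cf h1 h2 h3 h4.symm h5.symm n2
      exact ⟨_, _, _, _, _, _, _, _, D⟩
  · obtain ⟨h, p, q, x, y, D⟩ := dbl_of_noncore C M cf h2 h1 h3.symm h5.symm h4.symm n1
    exact ⟨_, _, _, _, _, _, _, _, D⟩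
end TC

set_option linter.unusedSectionVars false
namespace TC
variable {V : Type*} [DecidableEq V] [Fintype V] {G : SimpleGraph V}
variable {P : (V → Bool) → Prop}

theorem Dbl.T (C : Ctx G P) {φ : V → Bool} {f v g h p q x y : V} (D : Dbl G P φ f v g h p q x y)
    {φ' : ℕ → V → Bool} {c : ℕ → V} {t j : ℕ} (W : Walk G P φ' c (t+1)) (e0 : φ' 0 = φ) (ec : c 0 = f) (hj : j+1 < t)
    (hm : Mono G (φ' 0) (c 0) (c (j+1)) (c t)) : c t = v ∧ (c (j+1) = g ∨ c (j+1) = h) := by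
  obtain ⟨d1, d2, d3, d4, d5, σ, τ, s1, s2, s3, s4, t1, t2, t3, t4, hst⟩ := W.mid C hj hm rfl
  have hm' := hm
  obtain ⟨h1, h2, h3, h4, h5⟩ := hm
  rw [e0, ec] at h4 h5 d3 d4
  rw [ec] at h1 h2 t4 s4 hst
  have kne : φ f ≠ !φ f := by simp
  have N1 := D.nf _ h1
  have N2 := D.nf _ h2
  have D' := D
  obtain ⟨M, cf, cv, fv, fg, fh, vg, vh, ev, eg, eh, gh, ngh, fp, fq, pq, ep, eq, vx, vy, xy, ex, ey, nf, nv, vp, vq, fx, fy⟩ := D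
  have hv : c t = v ∨ c (j+1) = v := by
    have := cv _ _ _ (e0 ▸ hm')
    rw [ec] at this
    have := fv.ne
    grind
  rcases hv with hv | hv
  · have := h3.ne
    grind
  exfalso
  rw [hv] at h3 d1 d2 s1 t1
  have Nj := nv _ d1
  have Nj2 := nv _ d2
  have hj2 : c (j+2) = x ∨ c (j+2) = y := by grind
  have hj1 : c j = x ∨ c j = y := by grind
  rcases t4 with rfl | ⟨n1, n2, n3, n4⟩
  · rcases hj2 with h | h <;> rw [h] at t2
    · exact fx t2.symm
    · exact fy t2.symm
  · have hγ : c t = g ∨ c t = h := by have := h3.ne; grind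
    have Nτ := nv _ t1
    have hτ : τ = g ∨ τ = h := by grind
    have a1 : φ' (j+2) f = !φ f := by
      have := W.after (i := 0) (j+2) (by omega) (by omega)
      rwa [ec, e0] at this
    have a2 : φ' (j+2) v = !φ f := by
      have := W.after (i := j+1) (j+2) (by omega) (by omega)
      rw [e0, ← h4] at this
      rwa [hv] at this
    have a3 : φ' (j+2) τ = !φ f := by rw [t3, e0, ec]
    have m : Mono G (φ' (j+2)) f v τ := by
      refine ⟨fv, ?_, t1, ?_, ?_⟩
      · rcases hτ with rfl | rfl <;> assumption
      · rw [a1, a2]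
      · rw [a1, a3]
    have := W.core (j+2) (by omega) _ _ _ m
    have := vx.ne
    have := vy.ne
    grind

theorem Dbl.pg (C : Ctx G P) {φ : V → Bool} {f v g h p q x y : V} (D : Dbl G P φ f v g h p q x y)
    (pg : G.Adj p g) : ∃ d d' x' y', Core G (flip f φ) p ∧ Dbl G P (flip p (flip f φ)) p d g d' f q x' y' := by
  have D' := D
  obtain ⟨M, cf, cv, fv, fg, fh, vg, vh, ev, eg, eh, gh, ngh, fp, fq, pq, ep, eq, vx, vy, xy, ex, ey, nf, nv, vp, vq, fx, fy⟩ := D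
  have cp := M.flip_core C cf fp ep
  have kne : φ f ≠ !φ f := by simp
  have P2 := C.p2 _ _ (C.p2 _ _ M.hP cf) cp
  obtain ⟨ψ, hψ⟩ : ∃ ψ, ψ = flip p (flip f φ) := ⟨_, rfl⟩
  have hcψ : Core G ψ p := hψ ▸ core_flip cp
  rw [← hψ] at P2 ⊢
  have ψp : ψ p = φ f := by rw [hψ, flip_same, flip_ne _ fp.ne', ep, Bool.not_not]
  have ψf : ψ f = !φ f := by rw [hψ, flip_ne _ fp.ne, flip_same]
  have ψn : ∀ z, z ≠ f → z ≠ p → ψ z = φ z := fun z h1 h2 => by rw [hψ, flip_ne _ h2, flip_ne _ h1]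
  have ψv := ψn v fv.ne' (by grind)
  have ψg := ψn g fg.ne' pg.ne'
  have ψh := ψn h fh.ne' (by grind)
  have ψq := ψn q fq.ne' pq.ne'
  have kmax : ∀ a b, G.Adj p a → G.Adj p b → a ≠ g → b ≠ g → a ≠ b → ψ a = φ f → ψ b = φ f →
      Max G P ψ ∧ ∀ z, G.Adj p z → z = f ∨ z = q ∨ z = g ∨ z = a ∨ z = b := by
    intro a b pa pb ag bg ab ea eb
    have af : a ≠ f := by grind
    have bf : b ≠ f := by grind
    have N := C.deg p f q g a b fp.symm pq pg pa pb fq.ne fg.ne af.symm bf.symm (by grind) (by grind) (by grind) ag.symm bg.symm ab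
    refine ⟨⟨P2, ?_⟩, N⟩
    intro χ hχ
    have h0 := M.max χ hχ
    have h1 := mu_flip (G := G) φ f
    have h2 := mu_flip (G := G) (flip f φ) p
    rw [← hψ] at h2
    have s1 : sameN G φ f ≤ ({v, g, h} : Finset V).card := same_le (by
      intro z hz ez
      have := nf z hz
      simp; grind)
    have s2 : ({v, g, h} : Finset V).card ≤ 3 := Finset.card_le_three
    have s3 : ({p, q} : Finset V).card ≤ oppN G φ f := le_opp (by
      intro y hy; simp at hy; rcases hy with rfl | rfl <;> tauto)
    have s4 : ({p, q} : Finset V).card = 2 := Finset.card_pair pq.ne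
    have c1 : ∀ z, z ≠ p → flip f φ z = ψ z := fun z hz => by rw [hψ, flip_ne _ hz]
    have c2 : flip f φ p = !φ f := by rw [flip_ne _ fp.ne', ep]
    have s5 : sameN G (flip f φ) p ≤ ({f, q} : Finset V).card := same_le (by
      intro z hz ez
      have := N z hz
      rw [c1 z hz.ne', c2] at ez
      simp; grind)
    have s6 : ({f, q} : Finset V).card ≤ 2 := Finset.card_le_two
    have s7 : ({g, a, b} : Finset V).card ≤ oppN G (flip f φ) p := le_opp (by
      intro y hy; simp at hy
      rw [c2, Bool.not_not]
      rcases hy with rfl | rfl | rfl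
      · exact ⟨pg, by rw [c1 _ pg.ne', ψg, eg]⟩
      · exact ⟨pa, by rw [c1 _ pa.ne', ea]⟩
      · exact ⟨pb, by rw [c1 _ pb.ne', eb]⟩)
    have s8 : ({g, a, b} : Finset V).card = 3 := Finset.card_eq_three.2 ⟨g, a, b, ag.symm, bg.symm, ab, rfl⟩
    omega
  obtain ⟨d, pd, dg, ed⟩ : ∃ d, G.Adj p d ∧ G.Adj d g ∧ ψ d = φ f := by
    by_contra hcon
    push Not at hcon
    obtain ⟨a, b, h1, h2, h3, h4, h5⟩ := core_mono C P2 hcψ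
    rw [ψp] at h4 h5
    have ag : a ≠ g := by rintro rfl; exact hcon b h2 h3.symm h5
    have bg : b ≠ g := by rintro rfl; exact hcon a h1 h3 h4
    obtain ⟨Mψ, N⟩ := kmax a b h1 h2 ag bg h3.ne h4 h5
    obtain ⟨f1, v1, g1, h1', p1, q1, x1, y1, D1⟩ := Mψ.dbl C
    have cap : ∀ u, (∀ e1 e2 e3, Mono G ψ e1 e2 e3 → u ≠ e1 → u ≠ e2 → u ≠ e3 → False) → u = p ∨ u = a ∨ u = b := by
      intro u hu
      by_contra hn
      push Not at hn
      exact hu p a b ⟨h1, h2, h3, by rw [ψp, h4], by rw [ψp, h5]⟩ hn.1 hn.2.1 hn.2.2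
    have aux : ∀ e1 e2, G.Adj p e1 → G.Adj p e2 → G.Adj e1 e2 → ψ e1 = ψ p → ψ e2 = ψ p →
        (a = p ∨ a = e1 ∨ a = e2) ∧ (b = p ∨ b = e1 ∨ b = e2) := by
      intro e1 e2 r1 r2 r3 r4 r5
      rw [ψp] at r4 r5
      have n1 : e1 ≠ g := by rintro rfl; exact hcon e2 r2 r3.symm r5
      have n2 : e2 ≠ g := by rintro rfl; exact hcon e1 r1 r3 r4
      have := N e1 r1; have := N e2 r2; have := r3.ne
      grind
    have ca : Core G ψ a := core_of_nbr hcψ (fun e1 e2 r1 r2 r3 r4 r5 => (aux e1 e2 r1 r2 r3 r4 r5).1)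
    have cb : Core G ψ b := core_of_nbr hcψ (fun e1 e2 r1 r2 r3 r4 r5 => (aux e1 e2 r1 r2 r3 r4 r5).2)
    have m1 : Mono G ψ f1 v1 g1 := ⟨D1.fv, D1.fg, D1.vg, D1.ev.symm, D1.eg.symm⟩
    have m2 : Mono G ψ f1 v1 h1' := ⟨D1.fv, D1.fh, D1.vh, D1.ev.symm, D1.eh.symm⟩
    have := ca _ _ _ m1
    have := ca _ _ _ m2
    have := cb _ _ _ m1
    have := cb _ _ _ m2
    have := hcψ _ _ _ m1
    have := hcψ _ _ _ m2
    have := h1.ne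
    have := h2.ne
    have := h3.ne
    have := D1.gh
    grind
  have dne : d ≠ f := by grind
  have dv : d ≠ v := by rintro rfl; exact vp pd.symm
  have ngc : ¬ Core G ψ g := by
    intro gc
    obtain ⟨a, b, h1, h2, h3, h4, h5⟩ := block C P2 gc
    rw [ψg, eg] at h4 h5
    have := C.deg g v p d a b vg.symm pg.symm dg.symm h1 h2 (by grind) dv.symm (by grind) (by grind) pd.ne
      (by grind) (by grind) (by grind) (by grind) h3.ne f fg.symm
    have hf : f = a ∨ f = b := by have := fv.ne; have := fp.ne; grind
    obtain ⟨z, gz, fz, ez⟩ : ∃ z, G.Adj g z ∧ G.Adj f z ∧ ψ z = !φ f := by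
      rcases hf with rfl | rfl
      · exact ⟨b, h2, h3, h5⟩
      · exact ⟨a, h1, h3.symm, h4⟩
    have := nf z fz
    have hz : z = q := by grind
    subst hz
    exact C.k4 f g p z fg fp fq pg.symm gz pq
  obtain ⟨a, b, h1, h2, h3, h4, h5, h6, h7⟩ : ∃ a b, G.Adj p a ∧ G.Adj p b ∧ G.Adj a b ∧ ψ a = φ f ∧ ψ b = φ f ∧ a ≠ g ∧ b ≠ g := by
    by_contra hcon
    push Not at hcon
    apply ngc
    apply core_of_nbr hcψ
    intro a b h1 h2 h3 h4 h5
    rw [ψp] at h4 h5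
    by_cases h : a = g
    · exact Or.inr (Or.inl h.symm)
    · exact Or.inr (Or.inr (hcon a b h1 h2 h3 h4 h5 h).symm)
  obtain ⟨Mψ, N⟩ := kmax a b h1 h2 h6 h7 h3.ne h4 h5
  have hd : d = a ∨ d = b := by
    have := N d pd
    have := dg.ne
    grind
  obtain ⟨d', pd', dd', ed', gd'⟩ : ∃ d', G.Adj p d' ∧ G.Adj d d' ∧ ψ d' = φ f ∧ d' ≠ g := by
    rcases hd with rfl | rfl
    · exact ⟨b, h2, h3, h5, h7⟩
    · exact ⟨a, h1, h3.symm, h4, h6⟩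
  obtain ⟨Mψ, N⟩ := kmax d d' pd pd' dg.ne gd' dd'.ne ed ed'
  have cd : Core G ψ d := by
    apply core_of_nbr hcψ
    intro a b h1 h2 h3 h4 h5
    have nn : ¬ G.Adj g d' := fun h' => C.k4 _ _ _ _ pd pg pd' dg dd' h'
    have := N a h1; have := N b h2
    have := h3.ne
    have := h3.symm
    grind
  obtain ⟨x', y', DD⟩ := Dbl.mk' C Mψ hcψ cd pd pg pd' dg dd' (by rw [ed, ψp]) (by rw [ψg, ψp, eg]) (by rw [ed', ψp])
    gd'.symm fp.symm pq fq (by rw [ψp, ψf]) (by rw [ψq, ψp, eq])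
  exact ⟨d, d', x', y', cp, DD⟩
end TC

set_option linter.unusedSectionVars false
namespace TC
variable {V : Type*} [DecidableEq V] [Fintype V] {G : SimpleGraph V}
variable {P : (V → Bool) → Prop}

theorem Dbl.Q (C : Ctx G P) {φ : V → Bool} {f v g h p q x y : V} (D : Dbl G P φ f v g h p q x y)
    (pg : G.Adj p g) (xg : G.Adj x g) : False := by
  obtain ⟨d, d', x1, y1, cp, A⟩ := D.pg C pg
  obtain ⟨e, e', x2, y2, cx, B⟩ := D.swapfv.pg C xg
  have kne : φ f ≠ !φ f := by simp
  obtain ⟨φ1, hφ1⟩ : ∃ ψ, ψ = flip p (flip f φ) := ⟨_, rfl⟩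
  obtain ⟨φ2, hφ2⟩ : ∃ ψ, ψ = flip x (flip v φ) := ⟨_, rfl⟩
  rw [← hφ1] at A
  rw [← hφ2] at B
  obtain ⟨M, cf, cv, fv, fg, fh, vg, vh, ev, eg, eh, gh, ngh, fp, fq, pq, ep, eq, vx, vy, xy, ex, ey, nf, nv, vp, vq, fx, fy⟩ := D
  have px : p ≠ x := by rintro rfl; exact vp vx
  have py : p ≠ y := by rintro rfl; exact vp vy
  have qy : q ≠ y := by rintro rfl; exact vq vy
  have a1 : φ1 p = φ f := by rw [hφ1, flip_same, flip_ne _ fp.ne', ep, Bool.not_not]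
  have a2 : φ1 f = !φ f := by rw [hφ1, flip_ne _ fp.ne, flip_same]
  have a3 : ∀ z, z ≠ f → z ≠ p → φ1 z = φ z := fun z h1 h2 => by rw [hφ1, flip_ne _ h2, flip_ne _ h1]
  have b1 : φ2 x = φ f := by rw [hφ2, flip_same, flip_ne _ vx.ne', ex, Bool.not_not]
  have b2 : φ2 v = !φ f := by rw [hφ2, flip_ne _ vx.ne, flip_same, ev]
  have b3 : ∀ z, z ≠ v → z ≠ x → φ2 z = φ z := fun z h1 h2 => by rw [hφ2, flip_ne _ h2, flip_ne _ h1]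
  have a1v := a3 v fv.ne' (by grind)
  have a1g := a3 g fg.ne' pg.ne'
  have a1x := a3 x (by grind) px.symm
  have a1y := a3 y (by grind) py.symm
  have b1f := b3 f fv.ne (by grind)
  have b1g := b3 g vg.ne' xg.ne'
  have b1p := b3 p (by grind) px
  have b1y := b3 y vy.ne' xy.ne'
  have Aed := A.ev; have Aed' := A.eh; have Bee := B.ev; have Bee' := B.eh
  rw [a1] at Aed Aed'
  rw [b1] at Bee Bee'
  have dv : d ≠ v := by rintro rfl; exact vp A.fv.symm
  have dx : d ≠ x := by grind
  have df : d ≠ f := by grind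
  have ef : e ≠ f := by rintro rfl; exact fx B.fv.symm
  have evn : e ≠ v := by grind
  have ep' : e ≠ p := by grind
  have hed : e = d := by
    have := C.deg g f v p x d fg.symm vg.symm pg.symm xg.symm A.vg.symm fv.ne fp.ne (by grind) df.symm (by grind) vx.ne dv.symm
      px A.fv.ne dx.symm e B.vg.symm
    have := B.fv.ne
    grind
  subst hed
  have hx := A.nv x B.fv.symm
  have hx' : x = x1 ∨ x = y1 := by grind
  have A1 := A.ex; have A2 := A.ey
  rw [a1] at A1 A2
  obtain ⟨w, ew, xw, cw⟩ : ∃ w, G.Adj e w ∧ G.Adj x w ∧ φ1 w = !φ f := by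
    rcases hx' with rfl | rfl
    · exact ⟨y1, A.vy, A.xy, A2⟩
    · exact ⟨x1, A.vx, A.xy.symm, A1⟩
  have e'f : e' ≠ f := by rintro rfl; exact fx B.fh.symm
  have hw := B.nf w xw
  have e'p : e' ≠ p := by grind
  have e'v : e' ≠ v := by grind
  have ce' := a3 e' e'f e'p
  have ce'' := b3 e' e'v B.fh.ne'
  have hwy : w = y := by have := ew.ne; grind
  subst hwy
  have h1 := B.nv p A.fv.symm
  have h2 := B.nv w ew
  have h1' : p = x2 ∨ p = y2 := by grind
  have h2' : w = x2 ∨ w = y2 := by have := xy.ne; grind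
  have pw : G.Adj p w := by
    have := B.xy
    have := B.xy.symm
    grind
  have := A.nf w pw
  have := ew.ne
  grind

theorem walk_three {φ : V → Bool} (h : P φ) {a b d : V} (ca : Core G φ a) (cb : Core G (flip a φ) b)
    (cd : Core G (flip b (flip a φ)) d) (ab : a ≠ b) (ad : a ≠ d) (bd : b ≠ d) :
    ∃ (φ' : ℕ → V → Bool) (c : ℕ → V), Walk G P φ' c 3 ∧ φ' 0 = φ ∧ c 0 = a ∧ c 1 = b ∧ c 2 = d := by
  refine ⟨fun n => if n = 0 then φ else if n = 1 then flip a φ else if n = 2 then flip b (flip a φ) else flip d (flip b (flip a φ)),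
    fun n => if n = 0 then a else if n = 1 then b else d, ⟨by simpa using h, ?_, ?_, ?_⟩, by simp, by simp, by simp, by simp⟩
  · intro n hn
    obtain rfl | rfl | rfl : n = 0 ∨ n = 1 ∨ n = 2 := by omega
    all_goals simpa
  · intro n hn
    obtain rfl | rfl | rfl : n = 0 ∨ n = 1 ∨ n = 2 := by omega
    all_goals simp
  · intro i j hi hj
    obtain rfl | rfl | rfl : i = 0 ∨ i = 1 ∨ i = 2 := by omega
    all_goals obtain rfl | rfl | rfl : j = 0 ∨ j = 1 ∨ j = 2 := by omega
    all_goals simp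
    all_goals first | exact ab | exact ad | exact bd | exact ab.symm | exact ad.symm | exact bd.symm

theorem Dbl.R (C : Ctx G P) {φ : V → Bool} {f v g h p q x y : V} (D : Dbl G P φ f v g h p q x y)
    (pg : G.Adj p g) : G.Adj q h ∧ ∃ r1 r2, G.Adj r1 r2 ∧ G.Adj h r1 ∧ G.Adj h r2 ∧ r1 ≠ q ∧ r2 ≠ q ∧
      ∀ z, G.Adj h z → z = f ∨ z = v ∨ z = q ∨ z = r1 ∨ z = r2 := by
  obtain ⟨d, d', x1, y1, cp, A⟩ := D.pg C pg
  have kne : φ f ≠ !φ f := by simp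
  have D' := D
  obtain ⟨M, cf, cv, fv, fg, fh, vg, vh, ev, eg, eh, gh, ngh, fp, fq, pq, ep, eq, vx, vy, xy, ex, ey, nf, nv, vp, vq, fx, fy⟩ := D
  have dv : d ≠ v := by rintro rfl; exact vp A.fv.symm
  have df : d ≠ f := by
    rintro rfl
    have := A.ev
    rw [flip_ne _ fp.ne, flip_same, flip_same, flip_ne _ fp.ne', ep] at this
    simp at this
  have ed : φ d = φ f := by
    have := A.ev
    rw [flip_ne _ A.fv.ne', flip_ne _ df, flip_same, flip_ne _ fp.ne', ep] at this
    simpa using this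
  obtain ⟨φ0, c0, W0, i0, i1, i2, i3⟩ := walk_three M.hP cf cp A.cv fp.ne df.symm A.fv.ne
  obtain ⟨t, φ', c, ht, W, hφ, hc, l, hl1, hl2, hm⟩ := W0.stuck C (k := 2)
  have e0 : φ' 0 = φ := by rw [hφ 0 (by omega), i0]
  have ec : c 0 = f := by rw [hc 0 (by omega), i1]
  have ec1 : c 1 = p := by rw [hc 1 (by omega), i2]
  have ec2 : c 2 = d := by rw [hc 2 (by omega), i3]
  obtain ⟨j, rfl⟩ : ∃ j, l = j+1 := ⟨l-1, by omega⟩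
  obtain ⟨ctv, cj⟩ := D'.T C W e0 ec hl2 hm
  have gnf : ∀ i, i ≤ t → c i ≠ g := by
    intro i hi hg
    have n0 : i ≠ 0 := by rintro rfl; exact fg.ne (ec.symm.trans hg)
    have n1 : i ≠ 1 := by rintro rfl; exact pg.ne (ec1.symm.trans hg)
    have n2 : i ≠ 2 := by rintro rfl; exact A.vg.ne (ec2.symm.trans hg)
    have n3 : i ≠ t := by rintro rfl; exact vg.ne (ctv.symm.trans hg)
    have cg := W.core i (by omega)
    obtain ⟨a, b, ga, gb, ab, ea, eb⟩ := core_mono C (W.hP C i (by omega)) cg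
    rw [W.before le_rfl (by omega), e0] at ea eb
    rw [hg, eg] at ea eb
    rw [hg] at ga gb
    have kf : φ' i f = !φ f := by
      have := W.after (i := 0) i (by omega) (by omega)
      rwa [ec, e0] at this
    have kd : φ' i d = !φ f := by
      have := W.after (i := 2) i (by omega) (by omega)
      rwa [ec2, e0, ed] at this
    have af : a ≠ f := by grind
    have bf : b ≠ f := by grind
    have ad : a ≠ d := by grind
    have bd : b ≠ d := by grind
    have vpn : v ≠ p := by grind
    have key : ∀ z, G.Adj g z → (G.Adj z v ∨ G.Adj z p) → z ≠ f → z ≠ d → False := by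
      intro z gz hz zf zd
      rcases hz with hz | hz
      · rcases nv z hz.symm with h | h | h | h | h
        · exact zf h
        · exact gz.ne h.symm
        · exact ngh (h ▸ gz)
        · exact D'.Q C pg (h ▸ gz.symm)
        · exact D'.swapxy.Q C pg (h ▸ gz.symm)
      · rcases A.nf z hz.symm with h | h | h | h | h
        · exact zd h
        · exact gz.ne h.symm
        · exact A.ngh (h ▸ gz)
        · exact zf h
        · subst h; exact C.k4 f p z g fp fq fg pq pg gz.symm
    have k1 := key a ga
    have k2 := key b gb
    by_cases av : a = v
    · subst av; exact k2 (Or.inl ab.symm) bf bd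
    by_cases ap : a = p
    · subst ap; exact k2 (Or.inr ab.symm) bf bd
    have := C.deg g f v p d a fg.symm vg.symm pg.symm A.vg.symm ga fv.ne fp.ne df.symm af.symm vpn dv.symm (Ne.symm av)
      A.fv.ne (Ne.symm ap) ad.symm b gb
    have hb : b = v ∨ b = p := by have := ab.ne; grind
    rcases hb with rfl | rfl
    · exact k1 (Or.inl ab) af ad
    · exact k1 (Or.inr ab) af ad
  have hj : c (j+1) = h := by
    rcases cj with h' | h'
    · exact absurd h' (gnf _ (by omega))
    · exact h'
  obtain ⟨d1, d2, d3, d4, d5, σ, τ, s1, s2, s3, s4, t1, t2, t3, t4, hst⟩ := W.mid C hl2 hm rfl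
  rw [e0, ec] at d3 d4 s3 t3
  rw [ec] at s4 t4 hst
  rw [ctv] at s4 t4 hst
  rw [hj] at d1 d2 s1 t1
  have jf : c j ≠ f := by grind
  have jv : c j ≠ v := by grind
  have jf2 : c (j+2) ≠ f := by grind
  have jv2 : c (j+2) ≠ v := by grind
  have hτ : τ = f := by
    rcases t4 with h' | ⟨n1, n2, n3, n4⟩
    · exact h'
    exfalso
    have hσ : σ = v := by tauto
    subst hσ
    have Nh := C.deg h f σ (c j) (c (j+2)) τ fh.symm vh.symm d1 d2 t1 fv.ne jf.symm jf2.symm n1.symm jv.symm jv2.symm n2.symm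
      d5 n3.symm n4.symm
    have kh : φ' (j+1) h = φ f := by
      have := W.before (n := j+1) (i := j+1) le_rfl (by omega)
      rwa [hj, e0, eh] at this
    have kf : φ' (j+1) f = !φ f := by
      have := W.after (i := 0) (j+1) (by omega) (by omega)
      rwa [ec, e0] at this
    have kj2 : φ' (j+1) (c (j+2)) = !φ f := by
      have := W.before (n := j+1) (i := j+2) (by omega) (by omega)
      rwa [e0, d4] at this
    have kj : φ' (j+1) (c j) = φ f := by
      have := W.after (i := j) (j+1) (by omega) (by omega)
      rwa [e0, d3, Bool.not_not] at this
    have kτ : φ' (j+1) τ = !φ f := by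
      rw [W.step (j+1) (by omega), hj, flip_ne _ t1.ne'] at t3
      exact t3
    have kg : φ' (j+1) g = φ f := by
      have := W.unfl (v := g) (j+1) (by omega) (fun i hi => gnf i (by omega))
      rwa [e0, eg] at this
    have cσ : Core G (φ' (j+1)) σ := by
      have c1 := W.core (j+1) (by omega)
      have c2 := W.core_succ (n := j) (by omega)
      rw [hj] at c1
      apply core_of_nbr c1
      intro a b ha hb hab ea eb
      rw [kh] at ea eb
      have na := Nh a ha
      have nb := Nh b hb
      have := hab.ne
      grind
    obtain ⟨a, b, ha, hb, hab, ea, eb⟩ := block C (W.hP C (j+1) (by omega)) cσ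
    rw [s3] at ea eb
    have na := nv a ha
    have nb := nv b hb
    have hjj := nv _ s2.symm
    have hjx : c j = x ∨ c j = y := by have := d1.ne; grind
    have := hab.ne
    have := hab.symm
    have hax : a = f ∨ b = f := by grind
    rcases hax with rfl | rfl <;> grind
  subst hτ
  have hq : c (j+2) = q := by
    have := nf _ t2.symm
    have : c (j+2) ≠ p := by
      intro h'
      have := W.inj (j+2) 1 (by omega) (by omega) (h'.trans ec1.symm)
      omega
    grind
  rw [hq] at d2 d5 s4
  have σv : σ ≠ v := by
    rintro rfl
    have hjj := nv _ s2.symm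
    have hjx : c j = x ∨ c j = y := by have := d1.ne; grind
    rcases hjx with h' | h' <;> rw [h'] at d1
    · exact D'.swapgh.swappq.Q C d2.symm d1.symm
    · exact D'.swapgh.swappq.swapxy.Q C d2.symm d1.symm
  rcases s4 with h' | ⟨n1, n2, n3, n4⟩
  · exact absurd h' σv
  have vqn : v ≠ q := by grind
  refine ⟨d2.symm, c j, σ, s2, d1, s1, d5, n4, ?_⟩
  exact C.deg h τ v q (c j) σ fh.symm vh.symm d2 d1 s1 fv.ne fq.ne jf.symm n1.symm vqn jv.symm n2.symm d5.symm n4.symm n3.symm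

theorem Dbl.final1 (C : Ctx G P) {φ : V → Bool} {f v g h p q x y : V} (D : Dbl G P φ f v g h p q x y)
    (pg : G.Adj p g) : False := by
  obtain ⟨d, d', x1, y1, cp, A⟩ := D.pg C pg
  obtain ⟨qd', -⟩ := A.R C D.fg
  obtain ⟨-, s1, s2, s12, gs1, gs2, n1, n2, Ng⟩ := A.swapgh.swappq.R C qd'
  have hv := Ng v D.vg.symm
  have kne : φ f ≠ !φ f := by simp
  have vp : v ≠ p := by have := D.ev; have := D.ep; grind
  have vd : v ≠ d := by rintro rfl; exact D.vp A.fv.symm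
  have vf := D.fv.ne'
  obtain ⟨z, vz, gz, zf⟩ : ∃ z, G.Adj v z ∧ G.Adj g z ∧ z ≠ f := by
    have : v = s1 ∨ v = s2 := by tauto
    rcases this with rfl | rfl
    · exact ⟨s2, s12, gs2, n2⟩
    · exact ⟨s1, s12.symm, gs1, n1⟩
  rcases D.nv z vz with h | h | h | h | h
  · exact zf h
  · exact gz.ne h.symm
  · exact D.ngh (h ▸ gz)
  · exact D.Q C pg (h ▸ gz.symm)
  · exact D.swapxy.Q C pg (h ▸ gz.symm)

theorem ctx_false (C : Ctx G P) {φ : V → Bool} (h : P φ) : False := by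
  obtain ⟨φ, M⟩ := exists_max (G := G) h
  obtain ⟨f, v, g, h, p, q, x, y, D⟩ := M.dbl C
  obtain ⟨t, φ', c, -, W, hφ, hc, l, hl1, hl2, hm⟩ := (walk_one M.hP D.cf).stuck C (k := 0)
  have e0 := hφ 0 (by omega)
  have ec := hc 0 (by omega)
  simp at e0 ec
  obtain ⟨j, rfl⟩ : ∃ j, l = j+1 := ⟨l-1, by omega⟩
  obtain ⟨ctv, cj⟩ := D.T C W e0 ec hl2 hm
  obtain ⟨d1, d2, d3, d4, d5, σ, τ, s1, s2, s3, s4, t1, t2, t3, t4, hst⟩ := W.mid C hl2 hm rfl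
  rw [e0, ec] at d3 d4
  rw [ec, ctv] at hst
  have kne : φ f ≠ !φ f := by simp
  have := D.ev; have := D.eg; have := D.eh
  rcases hst with rfl | rfl
  · have hx : c j = x ∨ c j = y := by
      have := D.nv _ s2.symm
      grind
    rcases cj with h1 | h1 <;> rcases hx with h2 | h2 <;> rw [h1, h2] at d1
    · exact D.swapfv.final1 C d1.symm
    · exact D.swapxy.swapfv.final1 C d1.symm
    · exact D.swapgh.swapfv.final1 C d1.symm
    · exact D.swapgh.swapxy.swapfv.final1 C d1.symm
  · have hx : c (j+2) = p ∨ c (j+2) = q := by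
      have := D.nf _ t2.symm
      grind
    rcases cj with h1 | h1 <;> rcases hx with h2 | h2 <;> rw [h1, h2] at d2
    · exact D.final1 C d2.symm
    · exact D.swappq.final1 C d2.symm
    · exact D.swapgh.final1 C d2.symm
    · exact D.swapgh.swappq.final1 C d2.symm
end TC

set_option linter.unusedSectionVars false
namespace TD
variable {V : Type*} [DecidableEq V] [Fintype V] {G : SimpleGraph V} {p s m : ℕ}

def Clq (G : SimpleGraph V) (A : Finset V) : Prop := ∀ a ∈ A, ∀ b ∈ A, a ≠ b → G.Adj a b

def Tr (G : SimpleGraph V) (p : ℕ) (T : Finset V) : Prop := ∀ A, Clq G A → A.card = p → ∃ a ∈ A, a ∈ T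

structure Cx (G : SimpleGraph V) (p s m : ℕ) : Prop where
  hp : 4 ≤ p
  hs : 2 ≤ s
  deg : ∀ v (S : Finset V), (∀ x ∈ S, G.Adj v x) → S.card ≤ p + s
  kfree : ∀ A, Clq G A → A.card ≤ p
  min : ∀ T, Tr G p T → m ≤ T.card
  ce : ∀ T, Tr G p T → T.card = m → ∃ D, D ⊆ T ∧ Clq G D ∧ D.card = s + 1

def Hole (G : SimpleGraph V) (s m : ℕ) (U : Finset V) : Prop :=
  U.card + 1 = m ∧ ∀ D, D ⊆ U → Clq G D → D.card ≠ s + 1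

structure Miss (G : SimpleGraph V) (p : ℕ) (U A : Finset V) : Prop where
  clq : Clq G A
  card : A.card = p
  dis : ∀ a ∈ A, a ∉ U

def Ye (G : SimpleGraph V) (p : ℕ) (U : Finset V) (y : V) : Prop := ∀ A, Miss G p U A → y ∈ A

structure Blk (G : SimpleGraph V) (s : ℕ) (U : Finset V) (y : V) (D : Finset V) : Prop where
  sub : D ⊆ U
  clq : Clq G D
  card : D.card = s
  adj : ∀ z ∈ D, G.Adj y z

structure Prv (G : SimpleGraph V) (p : ℕ) (U : Finset V) (z : V) (B : Finset V) : Prop where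
  clq : Clq G B
  card : B.card = p
  mem : z ∈ B
  dis : ∀ b ∈ B, b ∈ U → b = z

theorem clq_insert {A : Finset V} (h : Clq G A) {e : V} (he : ∀ a ∈ A, a ≠ e → G.Adj e a) : Clq G (insert e A) := by
  intro a ha b hb hab
  rw [Finset.mem_insert] at ha hb
  rcases ha with rfl | ha <;> rcases hb with rfl | hb
  · exact absurd rfl hab
  · exact he b hb hab.symm
  · exact (he a ha hab).symm
  · exact h a ha b hb hab

theorem clq_sub {A B : Finset V} (h : Clq G A) (hs : B ⊆ A) : Clq G B :=
  fun a ha b hb hab => h a (hs ha) b (hs hb) hab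

theorem Cx.miss (C : Cx G p s m) {U : Finset V} (h : U.card < m) : ∃ A, Miss G p U A := by
  by_contra hcon
  push Not at hcon
  have : Tr G p U := by
    intro A h1 h2
    by_contra h3
    push Not at h3
    exact hcon A ⟨h1, h2, h3⟩
  have := C.min U this
  omega

theorem Cx.ye_tr (C : Cx G p s m) {U : Finset V} {y : V} (hy : Ye G p U y) : Tr G p (insert y U) := by
  intro A h1 h2
  by_contra h3
  push Not at h3
  have := hy A ⟨h1, h2, fun a ha h => h3 a ha (Finset.mem_insert_of_mem h)⟩
  exact h3 y this (Finset.mem_insert_self _ _)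

theorem Cx.ye_not (C : Cx G p s m) {U : Finset V} (hU : Hole G s m U) {y : V} (hy : Ye G p U y) : y ∉ U := by
  obtain ⟨A, hA⟩ := C.miss (U := U) (by have := hU.1; omega)
  exact hA.dis y (hy A hA)

theorem Cx.block (C : Cx G p s m) {U : Finset V} (hU : Hole G s m U) {y : V} (hy : Ye G p U y) : ∃ D, Blk G s U y D := by
  have hn := C.ye_not hU hy
  obtain ⟨D, h1, h2, h3⟩ := C.ce _ (C.ye_tr hy) (by rw [Finset.card_insert_of_notMem hn, hU.1])
  have hyD : y ∈ D := by
    by_contra h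
    exact hU.2 D ((Finset.subset_insert_iff_of_notMem h).1 h1) h2 h3
  refine ⟨D.erase y, ?_, clq_sub h2 (Finset.erase_subset _ _), by rw [Finset.card_erase_of_mem hyD, h3]; rfl, ?_⟩
  · rw [← Finset.subset_insert_iff]; exact h1
  · intro z hz
    rw [Finset.mem_erase] at hz
    exact h2 y hyD z hz.2 hz.1.symm

theorem Cx.priv (C : Cx G p s m) {U : Finset V} (hU : Hole G s m U) {y : V} (hy : Ye G p U y) {z : V} (hz : z ∈ U) :
    ∃ B, Prv G p U z B ∧ y ∉ B := by
  have hn := C.ye_not hU hy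
  obtain ⟨B, hB⟩ := C.miss (U := (insert y U).erase z) (by
    rw [Finset.card_erase_of_mem (Finset.mem_insert_of_mem hz), Finset.card_insert_of_notMem hn]
    have := hU.1; omega)
  have hyz : y ≠ z := by rintro rfl; exact hn hz
  have hyB : y ∉ B := fun h => hB.dis y h (by simp [hyz])
  obtain ⟨b, hb, hb2⟩ := C.ye_tr hy B hB.clq hB.card
  have hall : ∀ b ∈ B, b ∈ U → b = z := by
    intro b hb hbU
    by_contra h
    exact hB.dis b hb (by simp [h, hbU])
  rw [Finset.mem_insert] at hb2
  rcases hb2 with rfl | hb2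
  · exact absurd hb hyB
  · exact ⟨B, ⟨hB.clq, hB.card, hall b hb hb2 ▸ hb, hall⟩, hyB⟩

theorem Cx.extra (C : Cx G p s m) {U A D : Finset V} (hA : Miss G p U A) {y : V} (hy : y ∈ A) (hD : Blk G s U y D) {e f : V}
    (he : G.Adj y e) (hf : G.Adj y f) (eA : e ∉ A) (fA : f ∉ A) (eD : e ∉ D) (fD : f ∉ D) : e = f := by
  by_contra hef
  have := C.deg y (insert e (insert f ((A.erase y) ∪ D))) (by
    intro x hx
    simp only [Finset.mem_insert, Finset.mem_union, Finset.mem_erase] at hx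
    rcases hx with rfl | rfl | hx | hx
    · exact he
    · exact hf
    · exact hA.clq y hy x hx.2 hx.1.symm
    · exact hD.adj x hx)
  rw [Finset.card_insert_of_notMem (by simp; tauto), Finset.card_insert_of_notMem (by simp; tauto),
    Finset.card_union_of_disjoint, Finset.card_erase_of_mem hy, hA.card, hD.card] at this
  · have := C.hp; omega
  · rw [Finset.disjoint_left]
    intro a ha hd
    exact hA.dis a (Finset.mem_of_mem_erase ha) (hD.sub hd)

theorem Cx.nofull (C : Cx G p s m) {A : Finset V} (h : Clq G A) (hc : A.card = p) {e : V} (he : e ∉ A) (ha : ∀ a ∈ A, G.Adj e a) : False := by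
  have := C.kfree _ (clq_insert h (e := e) (fun a h _ => ha a h))
  rw [Finset.card_insert_of_notMem he] at this
  omega

theorem Cx.nofull2 (C : Cx G p s m) {A : Finset V} (h : Clq G A) (hc : A.card = p) {e f x : V} (he : e ∉ A) (hf : f ∉ A) (ef : G.Adj e f)
    (hx : x ∈ A) (hea : ∀ a ∈ A, a ≠ x → G.Adj e a) (hfa : ∀ a ∈ A, a ≠ x → G.Adj f a) : False := by
  have h1 : Clq G (insert f (A.erase x)) := clq_insert (clq_sub h (Finset.erase_subset _ _)) (by
    intro a ha _; rw [Finset.mem_erase] at ha; exact hfa a ha.2 ha.1)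
  have h2 : (insert f (A.erase x)).card = p := by
    rw [Finset.card_insert_of_notMem (by simp [hf]), Finset.card_erase_of_mem hx, hc]
    have := C.hp; omega
  apply C.nofull h1 h2 (e := e)
  · simp [he, ef.ne]
  · intro a ha
    rw [Finset.mem_insert, Finset.mem_erase] at ha
    rcases ha with rfl | ha
    · exact ef
    · exact hea a ha.2 ha.1
end TD

set_option linter.unusedSectionVars false
namespace TD
variable {V : Type*} [DecidableEq V] [Fintype V] {G : SimpleGraph V} {p s m : ℕ}

theorem cnt1 {A B : Finset V} (hc : A.card ≤ B.card) {x z : V} (hz : z ∈ B) (hx : x ∈ A)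
    (h : ∀ b ∈ B, b ≠ z → b ∈ A ∧ b ≠ x) : ∀ a ∈ A, a ≠ x → a ∈ B := by
  have hs : B.erase z ⊆ A.erase x := by
    intro b hb; rw [Finset.mem_erase] at hb ⊢; have := h b hb.2 hb.1; tauto
  have := Finset.eq_of_subset_of_card_le hs (by
    rw [Finset.card_erase_of_mem hz, Finset.card_erase_of_mem hx]; omega)
  intro a ha hax
  have : a ∈ B.erase z := by rw [this]; simp [ha, hax]
  exact Finset.mem_of_mem_erase this

theorem cnt2 {A B : Finset V} (hc : A.card ≤ B.card) {x x' z z' : V} (hz : z ∈ B) (hz' : z' ∈ B) (hzz : z ≠ z')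
    (hx : x ∈ A) (hx' : x' ∈ A) (hxx : x ≠ x')
    (h : ∀ b ∈ B, b ≠ z → b ≠ z' → b ∈ A ∧ b ≠ x ∧ b ≠ x') : ∀ a ∈ A, a ≠ x → a ≠ x' → a ∈ B := by
  have := cnt1 (A := A.erase x') (B := B.erase z') (x := x) (z := z) (by
    rw [Finset.card_erase_of_mem hz', Finset.card_erase_of_mem hx']; omega) (by simp [hz, hzz]) (by simp [hx, hxx])
    (by intro b hb hbz; rw [Finset.mem_erase] at hb ⊢; have := h b hb.2 hbz hb.1; tauto)
  intro a ha h1 h2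
  exact Finset.mem_of_mem_erase (this a (by simp [ha, h2]) h1)

theorem cnt3 {A B : Finset V} (hc : B.card ≤ A.card) {x z e : V} (hz : z ∈ B) (he : e ∈ B) (hze : z ≠ e) (zA : z ∉ A) (eA : e ∉ A)
    (hx : x ∈ A) : ∃ a ∈ A, a ≠ x ∧ a ∉ B := by
  by_contra hcon
  push Not at hcon
  have hs : insert z (insert e (A.erase x)) ⊆ B := by
    intro b hb
    simp only [Finset.mem_insert, Finset.mem_erase] at hb
    rcases hb with rfl | rfl | hb
    · exact hz
    · exact he
    · exact hcon b hb.2 hb.1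
  have := Finset.card_le_card hs
  rw [Finset.card_insert_of_notMem (by simp [hze, zA]), Finset.card_insert_of_notMem (by simp [eA]), Finset.card_erase_of_mem hx] at this
  have := Finset.card_pos.2 ⟨x, hx⟩
  omega

theorem cnt4 {A B : Finset V} (hc : A.card ≤ B.card) {x x' z : V} 
    (hx : x ∈ A) (hx' : x' ∈ A) (hxx : x ≠ x') (xB : x ∉ B) (xB' : x' ∉ B) : ∃ e ∈ B, e ≠ z ∧ e ∉ A := by
  by_contra hcon
  push Not at hcon
  have hs : B ⊆ insert z ((A.erase x).erase x') := by
    intro b hb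
    simp only [Finset.mem_insert, Finset.mem_erase]
    by_cases h : b = z
    · exact Or.inl h
    · exact Or.inr ⟨fun h => xB' (h ▸ hb), fun h => xB (h ▸ hb), hcon b hb h⟩
  have h1 := Finset.card_le_card hs
  have h2 := Finset.card_insert_le z ((A.erase x).erase x')
  rw [Finset.card_erase_of_mem (by simp [hx', hxx.symm]), Finset.card_erase_of_mem hx] at h2
  have := Finset.one_lt_card.2 ⟨x, hx, x', hx', hxx⟩
  omega

theorem three {S : Finset V} (h : 3 ≤ S.card) : ∃ a ∈ S, ∃ b ∈ S, ∃ c ∈ S, a ≠ b ∧ a ≠ c ∧ b ≠ c := by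
  obtain ⟨a, b, c, h1, h2, h3, h4⟩ := Finset.two_lt_card_iff.1 (show 2 < S.card by omega)
  exact ⟨a, h1, b, h2, c, h3, h4⟩

theorem Cx.clean1 (C : Cx G p s m) {U D B : Finset V} (hU : Hole G s m U) {x v z : V} (hx : Ye G p U x) (hv : Ye G p U v)
    (hxv : x ≠ v) (hD : Blk G s U v D) (hz : z ∈ D) (hB : Prv G p U z B) (vB : v ∈ B) (xB : x ∉ B)
    (hall : ∀ A, Miss G p U A → ∀ b ∈ B, b ≠ z → b ∈ A) : False := by
  obtain ⟨A, hA⟩ := C.miss (U := U) (by have := hU.1; omega)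
  have zU := hD.sub hz
  have hAB : ∀ A, Miss G p U A → ∀ a ∈ A, a ≠ x → a ∈ B := by
    intro A hA
    apply cnt1 (by rw [hA.card, hB.card]) hB.mem (hx A hA)
    intro b hb hbz
    exact ⟨hall A hA b hb hbz, fun h => xB (h ▸ hb)⟩
  have xA := hx A hA
  have zA : z ∉ A := fun h => hA.dis z h zU
  have Y : ∀ y ∈ A, Ye G p U y := by
    intro y hy A2 hA2
    by_cases h : y = x
    · exact h ▸ hx A2 hA2
    · exact hall A2 hA2 y (hAB A hA y hy h) (fun h => zA (h ▸ hy))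
  have za : ∀ a ∈ A, a ≠ x → G.Adj z a := fun a ha h => hB.clq z hB.mem a (hAB A hA a ha h) (fun h => zA (h ▸ ha))
  have xz : ¬ G.Adj z x := by
    intro h
    apply C.nofull hA.clq hA.card zA
    intro a ha
    by_cases hax : a = x
    · exact hax ▸ h
    · exact za a ha hax
  have key : ∀ m0 ∈ A, m0 ≠ x → ∃ e, e ∉ A ∧ e ∉ U ∧ G.Adj z e ∧ ∀ a ∈ A, a ≠ x → a ≠ m0 → G.Adj e a := by
    intro m0 hm0 hmx
    obtain ⟨B', hB', mB'⟩ := C.priv hU (Y m0 hm0) zU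
    have xB' : x ∉ B' := fun h => xz (hB'.clq z hB'.mem x h (fun h => zA (h ▸ xA)))
    have h1 : ∃ y ∈ B', y ∈ A ∧ y ≠ x := by
      by_contra hcon
      push Not at hcon
      have := C.deg z ((A.erase x) ∪ ((B'.erase z) ∪ (D.erase z))) (by
        intro w hw
        simp only [Finset.mem_union, Finset.mem_erase] at hw
        rcases hw with hw | hw | hw
        · exact za w hw.2 hw.1
        · exact hB'.clq z hB'.mem w hw.2 hw.1.symm
        · exact hD.clq z hz w hw.2 hw.1.symm)
      rw [Finset.card_union_of_disjoint, Finset.card_union_of_disjoint, Finset.card_erase_of_mem xA, Finset.card_erase_of_mem hB'.mem,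
        Finset.card_erase_of_mem hz, hA.card, hB'.card, hD.card] at this
      · have := C.hp; have := C.hs; omega
      · rw [Finset.disjoint_left]
        intro a ha hb
        rw [Finset.mem_erase] at ha hb
        exact ha.1 (hB'.dis a ha.2 (hD.sub hb.2))
      · rw [Finset.disjoint_left]
        intro a ha hb
        simp only [Finset.mem_union, Finset.mem_erase] at ha hb
        rcases hb with hb | hb
        · exact ha.1 (hcon a hb.2 ha.2)
        · exact hA.dis a ha.2 (hD.sub hb.2)
    obtain ⟨y, yB, yA, yx⟩ := h1
    obtain ⟨Dy, hDy⟩ := C.block hU (Y y yA)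
    obtain ⟨e, eB, ez, eA⟩ := cnt4 (A := A) (B := B') (by rw [hA.card, hB'.card]) (z := z) xA hm0 hmx.symm xB' mB'
    have nU : ∀ b ∈ B', b ≠ z → b ∉ U := fun b hb h1 h2 => h1 (hB'.dis b hb h2)
    have hun : ∀ b ∈ B', b ≠ z → b ≠ e → b ∈ A := by
      intro b hb bz be
      by_contra bA
      have n1 : y ≠ b := fun h => bA (h ▸ yA)
      have n2 : y ≠ e := fun h => eA (h ▸ yA)
      exact be (C.extra hA yA hDy (hB'.clq y yB b hb n1) (hB'.clq y yB e eB n2) bA eA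
        (fun h => nU b hb bz (hDy.sub h)) (fun h => nU e eB ez (hDy.sub h)))
    have hin := cnt2 (A := A) (B := B') (by rw [hA.card, hB'.card]) hB'.mem eB ez.symm xA hm0 hmx.symm (by
      intro b hb h1 h2
      exact ⟨hun b hb h1 h2, fun h => xB' (h ▸ hb), fun h => mB' (h ▸ hb)⟩)
    refine ⟨e, eA, nU e eB ez, hB'.clq z hB'.mem e eB ez.symm, fun a ha h1 h2 => ?_⟩
    exact hB'.clq e eB a (hin a ha h1 h2) (fun h => eA (h ▸ ha))
  obtain ⟨m1, hm1, m2, hm2, m3, hm3, n1, n2, n3⟩ := three (S := A.erase x) (by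
    rw [Finset.card_erase_of_mem xA, hA.card]; have := C.hp; omega)
  rw [Finset.mem_erase] at hm1 hm2 hm3
  obtain ⟨e, eA, eU, ze, he⟩ := key m1 hm1.2 hm1.1
  obtain ⟨f, fA, fU, zf, hf⟩ := key m2 hm2.2 hm2.1
  obtain ⟨D3, hD3⟩ := C.block hU (Y m3 hm3.2)
  have : e = f := C.extra hA hm3.2 hD3 (he m3 hm3.2 hm3.1 n2.symm).symm (hf m3 hm3.2 hm3.1 n3.symm).symm eA fA
    (fun h => eU (hD3.sub h)) (fun h => fU (hD3.sub h))
  subst this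
  apply C.nofull2 hA.clq hA.card zA eA ze xA za
  intro a ha hax
  by_cases h : a = m1
  · exact hf a ha hax (h ▸ n1)
  · exact he a ha hax h

theorem Cx.clean2 (C : Cx G p s m) {U D B : Finset V} (hU : Hole G s m U) {x v z : V} (hx : Ye G p U x) (hv : Ye G p U v)
    (hxv : x ≠ v) (hD : Blk G s U v D) (hz : z ∈ D) (hB : Prv G p U z B) (vB : v ∈ B) (xB : x ∉ B)
    {A : Finset V} (hA : Miss G p U A) {e : V} (eB : e ∈ B) (ez : e ≠ z) (eA : e ∉ A) : False := by
  have hp := C.hp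
  have hs := C.hs
  have zU := hD.sub hz
  have xA := hx A hA
  have vA := hv A hA
  have zA : z ∉ A := fun h => hA.dis z h zU
  have eU : e ∉ U := fun h => ez (hB.dis e eB h)
  have ve : G.Adj v e := hB.clq v vB e eB (fun h => eA (h ▸ vA))
  have zadj : ∀ b ∈ B, b ≠ z → G.Adj z b := fun b hb h => hB.clq z hB.mem b hb h.symm
  have ze := zadj e eB ez
  have hout : ∀ y, Ye G p U y → y ∈ A → G.Adj y e → ∀ b, G.Adj y b → b ∉ U → b ≠ e → b ∈ A := by
    intro y hy yA ye b yb bU be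
    by_contra bA
    obtain ⟨Dy, hDy⟩ := C.block hU hy
    exact be (C.extra hA yA hDy yb ye bA eA (fun h => bU (hDy.sub h)) (fun h => eU (hDy.sub h)))
  have hBA : ∀ b ∈ B, b ≠ z → b ≠ e → b ∈ A := by
    intro b hb bz be
    by_cases h : b = v
    · exact h ▸ vA
    exact hout v hv vA ve b (hB.clq v vB b hb (Ne.symm h)) (fun h => bz (hB.dis b hb h)) be
  obtain ⟨m0, m0A, m0x, m0B⟩ := cnt3 (A := A) (B := B) (by rw [hA.card, hB.card]) hB.mem eB ez.symm zA eA xA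
  have hAB := cnt2 (A := A) (B := B) (by rw [hA.card, hB.card]) hB.mem eB ez.symm xA m0A m0x.symm (by
      intro b hb h1 h2
      exact ⟨hBA b hb h1 h2, fun h => xB (h ▸ hb), fun h => m0B (h ▸ hb)⟩)
  have Y : ∀ y ∈ A, y ∈ B → Ye G p U y := by
    intro y yA yB A2 hA2
    by_contra yA2
    have vA2 := hv A2 hA2
    have h1 : ∀ b ∈ A2, b ≠ e → b ∈ A := by
      intro b hb be
      by_cases h : b = v
      · exact h ▸ vA
      exact hout v hv vA ve b (hA2.clq v vA2 b hb (Ne.symm h)) (hA2.dis b hb) be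
    have eA2 : e ∈ A2 := by
      by_contra h
      have hs : A2 ⊆ A := fun b hb => h1 b hb (fun h' => h (h' ▸ hb))
      have := Finset.eq_of_subset_of_card_le hs (by rw [hA.card, hA2.card])
      exact yA2 (this ▸ yA)
    have h2 := cnt1 (A := A) (B := A2) (by rw [hA.card, hA2.card]) eA2 yA (by
      intro b hb be
      exact ⟨h1 b hb be, fun h => yA2 (h ▸ hb)⟩)
    apply C.nofull hA.clq hA.card eA
    intro a ha
    have ne : e ≠ a := fun h => eA (h ▸ ha)
    by_cases h : a = y
    · subst h; exact hB.clq e eB a yB ne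
    · exact hA2.clq e eA2 a (h2 a ha h) ne
  have adjz : ∀ y ∈ A, y ∈ B → G.Adj z y := fun y yA yB => zadj y yB (fun h => zA (h ▸ yA))
  have adje : ∀ y ∈ A, y ∈ B → G.Adj e y := fun y yA yB => hB.clq e eB y yB (fun h => eA (h ▸ yA))
  have zblk : ∀ y ∈ A, y ∈ B → ∀ D', Blk G s U y D' → z ∈ D' := by
    intro y yA yB D' hD'
    by_contra h
    exact ez (C.extra hA yA hD' (adje y yA yB).symm (adjz y yA yB).symm eA zA (fun h => eU (hD'.sub h)) h)
  have hdis : ∀ m0 ∈ A, m0 ∈ B → ∀ B', Prv G p U z B' → m0 ∉ B' → ∀ y ∈ A, y ∈ B → y ∉ B' := by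
    intro m mA mB B' hB' mB' y yA yB yB'
    have h1 : ∀ b ∈ B', b ≠ z → b ≠ e → b ∈ A := by
      intro b hb bz be
      by_cases h : b = y
      · exact h ▸ yA
      exact hout y (Y y yA yB) yA (adje y yA yB).symm b (hB'.clq y yB' b hb (Ne.symm h)) (fun h => bz (hB'.dis b hb h)) be
    by_cases eB' : e ∈ B'
    · obtain ⟨m1, m1A, m1m, m1B⟩ := cnt3 (A := A) (B := B') (by rw [hA.card, hB'.card]) hB'.mem eB' ez.symm zA eA mA
      have h2 := cnt2 (A := A) (B := B') (by rw [hA.card, hB'.card]) hB'.mem eB' ez.symm mA m1A m1m.symm (by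
        intro b hb hbz hbe
        exact ⟨h1 b hb hbz hbe, fun h => mB' (h ▸ hb), fun h => m1B (h ▸ hb)⟩)
      apply C.nofull2 hA.clq hA.card zA eA ze m1A
      · intro a ha ham
        by_cases h : a = m
        · exact h ▸ adjz m mA mB
        · exact hB'.clq z hB'.mem a (h2 a ha h ham) (fun h => zA (h ▸ ha))
      · intro a ha ham
        by_cases h : a = m
        · exact h ▸ adje m mA mB
        · exact hB'.clq e eB' a (h2 a ha h ham) (fun h => eA (h ▸ ha))
    · have h2 := cnt1 (A := A) (B := B') (by rw [hA.card, hB'.card]) hB'.mem mA (by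
        intro b hb hbz
        exact ⟨h1 b hb hbz (fun h => eB' (h ▸ hb)), fun h => mB' (h ▸ hb)⟩)
      apply C.nofull hA.clq hA.card zA
      intro a ha
      by_cases h : a = m
      · exact h ▸ adjz m mA mB
      · exact hB'.clq z hB'.mem a (h2 a ha h) (fun h => zA (h ▸ ha))
  obtain ⟨Bv, hBv, vBv⟩ := C.priv hU hv zU
  have hdv := hdis v vA vB Bv hBv vBv
  have cP : ((A.erase x).erase m0).card = p - 2 := by
    rw [Finset.card_erase_of_mem (by simp [m0A, m0x]), Finset.card_erase_of_mem xA, hA.card]; omega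
  have memP : ∀ a, a ∈ (A.erase x).erase m0 ↔ a ∈ A ∧ a ∈ B := by
    intro a
    simp only [Finset.mem_erase]
    constructor
    · rintro ⟨h1, h2, h3⟩; exact ⟨h3, hAB a h3 h2 h1⟩
    · rintro ⟨h1, h2⟩; exact ⟨fun h => m0B (h ▸ h2), fun h => xB (h ▸ h2), h1⟩
  obtain ⟨P, hP⟩ : ∃ P, P = (A.erase x).erase m0 := ⟨_, rfl⟩
  rw [← hP] at cP memP
  have cN : (P ∪ ((Bv.erase z) ∪ (D.erase z))).card = (p - 2) + ((p - 1) + (s - 1)) := by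
    rw [Finset.card_union_of_disjoint, Finset.card_union_of_disjoint, Finset.card_erase_of_mem hBv.mem,
        Finset.card_erase_of_mem hz, cP, hBv.card, hD.card]
    · rw [Finset.disjoint_left]
      intro a ha hb
      rw [Finset.mem_erase] at ha hb
      exact ha.1 (hBv.dis a ha.2 (hD.sub hb.2))
    · rw [Finset.disjoint_left]
      intro a ha hb
      simp only [Finset.mem_union, Finset.mem_erase] at hb
      rw [memP] at ha
      rcases hb with hb | hb
      · exact hdv a ha.1 ha.2 hb.2
      · exact hA.dis a ha.1 (hD.sub hb.2)
  have aN : ∀ w ∈ P ∪ ((Bv.erase z) ∪ (D.erase z)), G.Adj z w := by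
    intro w hw
    simp only [Finset.mem_union, Finset.mem_erase] at hw
    rw [memP] at hw
    rcases hw with hw | hw | hw
    · exact adjz w hw.1 hw.2
    · exact hBv.clq z hBv.mem w hw.2 hw.1.symm
    · exact hD.clq z hz w hw.2 hw.1.symm
  have hdeg := C.deg z _ aN
  have hp4 : p = 4 := by omega
  have exact : ∀ w, G.Adj z w → w ∈ P ∪ ((Bv.erase z) ∪ (D.erase z)) := by
    intro w hw
    by_contra h
    have := C.deg z (insert w (P ∪ ((Bv.erase z) ∪ (D.erase z)))) (by
      intro a ha
      rw [Finset.mem_insert] at ha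
      rcases ha with rfl | ha
      · exact hw
      · exact aN a ha)
    rw [Finset.card_insert_of_notMem h] at this
    omega
  simp only [Finset.mem_union, Finset.mem_erase, memP] at exact
  have eBv : e ∈ Bv := by
    rcases exact e ze with h | h | h
    · exact absurd h.1 eA
    · exact h.2
    · exact absurd (hD.sub h.2) eU
  obtain ⟨y, hyP, hyv⟩ : ∃ y ∈ P, y ≠ v := Finset.exists_mem_ne (by omega) v
  rw [memP] at hyP
  obtain ⟨yA, yB⟩ := hyP
  have P2 : ∀ a, a ∈ A → a ∈ B → a = v ∨ a = y := by
    intro a haA haB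
    by_contra h
    push Not at h
    have : 2 < P.card := Finset.two_lt_card.2 ⟨a, (memP a).2 ⟨haA, haB⟩, v, (memP v).2 ⟨vA, vB⟩, y, (memP y).2 ⟨yA, yB⟩, h.1, h.2, hyv.symm⟩
    omega
  have yY := Y y yA yB
  obtain ⟨Dy, hDy⟩ := C.block hU yY
  have zDy := zblk y yA yB Dy hDy
  have DyD : Dy = D := by
    apply Finset.eq_of_subset_of_card_le _ (by rw [hDy.card, hD.card])
    intro w hw
    by_cases h : w = z
    · exact h ▸ hz
    have wU := hDy.sub hw
    rcases exact w (hDy.clq z zDy w hw (Ne.symm h)) with h' | h' | h'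
    · exact absurd wU (hA.dis w h'.1)
    · exact absurd (hBv.dis w h'.2 wU) h
    · exact h'.2
  subst DyD
  have vU : v ∉ U := hA.dis v vA
  have yU : y ∉ U := hA.dis y yA
  have vy : G.Adj v y := hA.clq v vA y yA hyv.symm
  have s2 : s = 2 := by
    have h1 : Clq G (insert v (insert y Dy)) := by
      apply clq_insert (clq_insert hD.clq (fun a ha _ => hDy.adj a ha))
      intro a ha _
      rw [Finset.mem_insert] at ha
      rcases ha with rfl | ha
      · exact vy
      · exact hD.adj a ha
    have := C.kfree _ h1
    rw [Finset.card_insert_of_notMem (by simp [hyv.symm]; exact fun h => vU (hD.sub h)),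
      Finset.card_insert_of_notMem (fun h => yU (hD.sub h)), hD.card] at this
    omega
  have vND : ∀ u ∈ U, G.Adj v u → u ∈ Dy := by
    intro u uU vu
    by_contra h
    have : u = e := C.extra hA vA hD vu ve (fun h => hA.dis u h uU) eA h (fun h => eU (hD.sub h))
    exact eU (this ▸ uU)
  obtain ⟨U', hU'⟩ : ∃ U', U' = (insert v U).erase z := ⟨_, rfl⟩
  have memU' : ∀ w, w ∈ U' ↔ w ≠ z ∧ (w = v ∨ w ∈ U) := by intro w; simp [hU']
  have vz : v ≠ z := fun h => vU (h ▸ zU)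
  have hole' : Hole G s m U' := by
    constructor
    · rw [hU', Finset.card_erase_of_mem (Finset.mem_insert_of_mem zU), Finset.card_insert_of_notMem vU]
      have := hU.1; omega
    · intro K hK hKc hKs
      by_cases vK : v ∈ K
      · have : K.erase v ⊆ Dy.erase z := by
          intro w hw
          rw [Finset.mem_erase] at hw ⊢
          have := (memU' w).1 (hK hw.2)
          exact ⟨this.1, vND w (by tauto) (hKc v vK w hw.2 hw.1.symm)⟩
        have := Finset.card_le_card this
        rw [Finset.card_erase_of_mem vK, Finset.card_erase_of_mem hz, hD.card] at this
        omega
      · refine hU.2 K ?_ hKc hKs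
        intro w hw
        have := (memU' w).1 (hK hw)
        rcases this.2 with rfl | h
        · exact absurd hw vK
        · exact h
  have eY : Ye G p U' e := by
    intro A' hA'
    have vA' : v ∉ A' := fun h => hA'.dis v h ((memU' v).2 ⟨vz, Or.inl rfl⟩)
    have nU' : ∀ w ∈ A', w ≠ z → w ∉ U := fun w hw h1 h2 => hA'.dis w hw ((memU' w).2 ⟨h1, Or.inr h2⟩)
    have zA' : z ∈ A' := by
      by_contra h
      exact vA' (hv A' ⟨hA'.clq, hA'.card, fun w hw => nU' w hw (fun h' => h (h' ▸ hw))⟩)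
    by_contra eA'
    have h1 : ∀ w ∈ A', w ≠ z → w = y ∨ (w ∈ Bv ∧ w ≠ z ∧ w ≠ e) := by
      intro w hw wz
      rcases exact w (hA'.clq z zA' w hw wz.symm) with h | h | h
      · rcases P2 w h.1 h.2 with rfl | h
        · exact absurd hw vA'
        · exact Or.inl h
      · exact Or.inr ⟨h.2, wz, fun h => eA' (h ▸ hw)⟩
      · exact absurd (hD.sub h.2) (nU' w hw wz)
    have yA' : y ∈ A' := by
      by_contra h
      have hs : A'.erase z ⊆ (Bv.erase z).erase e := by
        intro w hw
        rw [Finset.mem_erase] at hw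
        simp only [Finset.mem_erase]
        rcases h1 w hw.2 hw.1 with h' | h'
        · exact absurd (h' ▸ hw.2) h
        · tauto
      have := Finset.card_le_card hs
      rw [Finset.card_erase_of_mem zA', Finset.card_erase_of_mem (by simp [eBv, ez]), Finset.card_erase_of_mem hBv.mem, hA'.card, hBv.card] at this
      omega
    have h2 := cnt1 (A := A) (B := A') (by rw [hA.card, hA'.card]) zA' vA (by
      intro b hb hbz
      refine ⟨?_, fun h => vA' (h ▸ hb)⟩
      by_cases h : b = y
      · exact h ▸ yA
      exact hout y yY yA (adje y yA yB).symm b (hA'.clq y yA' b hb (Ne.symm h)) (nU' b hb hbz) (fun h => eA' (h ▸ hb)))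
    apply C.nofull hA.clq hA.card zA
    intro a ha
    by_cases h : a = v
    · exact h ▸ adjz v vA vB
    · exact hA'.clq z zA' a (h2 a ha h) (fun h => zA (h ▸ ha))
  obtain ⟨De, hDe⟩ := C.block hole' eY
  have vDe : v ∈ De := by
    by_contra h
    have yBv := hdv y yA yB
    have := C.deg e (insert v (insert y ((Bv.erase e) ∪ De))) (by
      intro w hw
      simp only [Finset.mem_insert, Finset.mem_union, Finset.mem_erase] at hw
      rcases hw with rfl | rfl | hw | hw
      · exact ve.symm
      · exact adje _ yA yB
      · exact hBv.clq e eBv w hw.2 hw.1.symm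
      · exact hDe.adj w hw)
    rw [Finset.card_insert_of_notMem (by simp [hyv.symm, vBv, h]), Finset.card_insert_of_notMem, Finset.card_union_of_disjoint,
      Finset.card_erase_of_mem eBv, hBv.card, hDe.card] at this
    · omega
    · rw [Finset.disjoint_left]
      intro a ha hb
      have h1 := (memU' a).1 (hDe.sub hb)
      have h2 := Finset.mem_of_mem_erase ha
      rcases h1.2 with rfl | h3
      · exact vBv h2
      · exact h1.1 (hBv.dis a h2 h3)
    · simp only [Finset.mem_union, Finset.mem_erase, not_or]
      refine ⟨fun h => yBv h.2, fun h => ?_⟩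
      have h1 := (memU' y).1 (hDe.sub h)
      tauto
  obtain ⟨w, hw, hwv⟩ : ∃ w ∈ De, w ≠ v := Finset.exists_mem_ne (by rw [hDe.card]; omega) v
  have hwU := (memU' w).1 (hDe.sub hw)
  have wD : w ∈ Dy := vND w (by tauto) (hDe.clq v vDe w hw hwv.symm)
  have wU := hD.sub wD
  have hzA : z ∉ ({y, v} : Finset V) := by simp; exact ⟨fun h => yU (h ▸ zU), vz.symm⟩
  have c1 : Clq G ({y, v} : Finset V) := by
    intro a ha b hb hab
    simp at ha hb
    have := vy.symm
    grind
  have c2 : Clq G (insert z {y, v}) := clq_insert c1 (by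
    intro a ha _; simp at ha; rcases ha with rfl | rfl
    · exact adjz _ yA yB
    · exact adjz _ vA vB)
  have c3 : Clq G (insert w (insert z {y, v})) := clq_insert c2 (by
    intro a ha _; simp at ha; rcases ha with rfl | rfl | rfl
    · exact hD.clq w wD _ hz hwU.1
    · exact (hDy.adj w wD).symm
    · exact (hD.adj w wD).symm)
  have c4 : Clq G (insert e (insert w (insert z {y, v}))) := clq_insert c3 (by
    intro a ha _; simp at ha; rcases ha with rfl | rfl | rfl | rfl
    · exact hDe.adj _ hw
    · exact ze.symm
    · exact adje _ yA yB
    · exact ve.symm)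
  have := C.kfree _ c4
  rw [Finset.card_insert_of_notMem, Finset.card_insert_of_notMem, Finset.card_insert_of_notMem hzA, Finset.card_pair hyv] at this
  · omega
  · simp only [Finset.mem_insert, Finset.mem_singleton, not_or]
    exact ⟨hwU.1, fun h => yU (h ▸ wU), hwv⟩
  · simp only [Finset.mem_insert, Finset.mem_singleton, not_or]
    exact ⟨fun h => eU (h ▸ wU), ez, fun h => eA (h ▸ yA), fun h => eA (h ▸ vA)⟩

theorem Cx.clean (C : Cx G p s m) {U D B : Finset V} (hU : Hole G s m U) {x v z : V} (hx : Ye G p U x) (hv : Ye G p U v)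
    (hxv : x ≠ v) (hD : Blk G s U v D) (hz : z ∈ D) (hB : Prv G p U z B) (vB : v ∈ B) (xB : x ∉ B) : False := by
  by_cases hall : ∀ A, Miss G p U A → ∀ b ∈ B, b ≠ z → b ∈ A
  · exact C.clean1 hU hx hv hxv hD hz hB vB xB hall
  · push Not at hall
    obtain ⟨A, hA, e, eB, ez, eA⟩ := hall
    exact C.clean2 hU hx hv hxv hD hz hB vB xB hA eB ez eA
end TD

set_option linter.unusedSectionVars false
namespace TD
variable {V : Type*} [DecidableEq V] [Fintype V] {G : SimpleGraph V} {p s m : ℕ}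

theorem Cx.yeor (C : Cx G p s m) {U A A2 : Finset V} (hU : Hole G s m U) {x u c : V} (hx : Ye G p U x)
    (hA : Miss G p U A) (hA2 : Miss G p U A2) (uA : u ∈ A) (uA2 : u ∉ A2) (cA : c ∈ A) (cu : c ≠ u) : Ye G p U c := by
  intro A3 hA3
  by_contra cA3
  obtain ⟨D, hD⟩ := C.block hU hx
  have xA := hx A hA
  have hex : ∀ A2, Miss G p U A2 → ∀ u ∈ A, u ∉ A2 → ∃ b ∈ A2, b ∉ A ∧ (∀ c ∈ A2, c ≠ b → c ∈ A) ∧ ∀ a ∈ A, a ≠ u → a ∈ A2 := by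
    intro A2 hA2 u uA uA2
    obtain ⟨b, bA2, bA⟩ : ∃ b ∈ A2, b ∉ A := by
      by_contra h
      push Not at h
      exact uA2 (Finset.eq_of_subset_of_card_le h (by rw [hA.card, hA2.card]) ▸ uA)
    have h1 : ∀ c ∈ A2, c ≠ b → c ∈ A := by
      intro c hc hcb
      by_contra hcA
      have hxA2 := hx A2 hA2
      exact hcb (C.extra hA xA hD (hA2.clq x hxA2 c hc (fun h => hcA (h ▸ xA))) (hA2.clq x hxA2 b bA2 (fun h => bA (h ▸ xA)))
        hcA bA (fun h => hA2.dis c hc (hD.sub h)) (fun h => hA2.dis b bA2 (hD.sub h)))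
    refine ⟨b, bA2, bA, h1, ?_⟩
    apply cnt1 (by rw [hA.card, hA2.card]) bA2 uA
    intro c hc hcb
    exact ⟨h1 c hc hcb, fun h => uA2 (h ▸ hc)⟩
  obtain ⟨b, bA2, bA, -, h2⟩ := hex A2 hA2 u uA uA2
  obtain ⟨b', bA3, bA', -, h3⟩ := hex A3 hA3 c cA cA3
  have hb : b = b' := C.extra hA xA hD (hA2.clq x (hx A2 hA2) b bA2 (fun h => bA (h ▸ xA)))
    (hA3.clq x (hx A3 hA3) b' bA3 (fun h => bA' (h ▸ xA))) bA bA' (fun h => hA2.dis b bA2 (hD.sub h)) (fun h => hA3.dis b' bA3 (hD.sub h))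
  subst hb
  apply C.nofull hA.clq hA.card bA
  intro a ha
  have hne : b ≠ a := fun h => bA (h ▸ ha)
  by_cases h : a = u
  · exact hA3.clq b bA3 a (h3 a ha (h ▸ cu.symm)) hne
  · exact hA2.clq b bA2 a (h2 a ha h) hne

theorem Cx.two (C : Cx G p s m) {U : Finset V} (hU : Hole G s m U) {x : V} (hx : Ye G p U x) : ∃ y, Ye G p U y ∧ y ≠ x := by
  obtain ⟨A, hA⟩ := C.miss (U := U) (by have := hU.1; omega)
  have xA := hx A hA
  have : 1 < (A.erase x).card := by rw [Finset.card_erase_of_mem xA, hA.card]; have := C.hp; omega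
  obtain ⟨a, ha, b, hb, hab⟩ := Finset.one_lt_card.1 this
  rw [Finset.mem_erase] at ha hb
  by_cases h : Ye G p U a
  · exact ⟨a, h, ha.1⟩
  · unfold Ye at h
    push Not at h
    obtain ⟨A2, hA2, h2⟩ := h
    exact ⟨b, C.yeor hU hx hA hA2 ha.2 h2 hb.2 hab.symm, hb.1⟩

structure Wk (G : SimpleGraph V) (p s m : ℕ) (T0 : Finset V) (x y : ℕ → V) (U : ℕ → Finset V) (k : ℕ) : Prop where
  hole : ∀ i, i ≤ k → Hole G s m (U i)
  yx : ∀ i, i ≤ k → Ye G p (U i) (x i)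
  xT : ∀ i, i ≤ k → x i ∈ T0
  inj : ∀ i j, i ≤ k → j ≤ k → x i = x j → i = j
  mem : ∀ i, i ≤ k → ∀ t, t ∈ U i ↔ (t ∈ T0 ∧ ∀ j, j ≤ i → t ≠ x j) ∨ ∃ j, j < i ∧ t = y j
  yT : ∀ i, i < k → y i ∉ T0
  yy : ∀ i, i < k → Ye G p (U i) (y i)
  xb : ∀ i, i < k → ∀ D, Blk G s (U i) (y i) D → x (i+1) ∈ D

variable {T0 : Finset V} {x y : ℕ → V} {U : ℕ → Finset V} {k : ℕ}

theorem Wk.y_mem (W : Wk G p s m T0 x y U k) {i j : ℕ} (hij : i < j) (hj : j ≤ k) : y i ∈ U j :=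
  (W.mem j hj _).2 (Or.inr ⟨i, hij, rfl⟩)

theorem Wk.x_mem (W : Wk G p s m T0 x y U k) {i j : ℕ} (hij : i < j) (hj : j ≤ k) : x j ∈ U i :=
  (W.mem i (by omega) _).2 (Or.inl ⟨W.xT j hj, fun l hl h => by have := W.inj j l hj (by omega) h; omega⟩)

theorem Wk.x_not (W : Wk G p s m T0 x y U k) {i j : ℕ} (hij : i ≤ j) (hj : j ≤ k) : x i ∉ U j := by
  intro h
  rcases (W.mem j hj _).1 h with h | ⟨l, hl, h⟩
  · exact h.2 i hij rfl
  · exact W.yT l (by omega) (h ▸ W.xT i (by omega))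

theorem Wk.mem_later (W : Wk G p s m T0 x y U k) {i j : ℕ} (hij : i ≤ j) (hj : j ≤ k) {w : V} (hw : w ∈ U j) (hn : w ∉ U i) :
    ∃ l, i ≤ l ∧ l < j ∧ w = y l := by
  rcases (W.mem j hj _).1 hw with h | ⟨l, hl, h⟩
  · exact absurd ((W.mem i (by omega) _).2 (Or.inl ⟨h.1, fun l hl => h.2 l (by omega)⟩)) hn
  · refine ⟨l, ?_, hl, h⟩
    by_contra h'
    exact hn ((W.mem i (by omega) _).2 (Or.inr ⟨l, by omega, h⟩))

theorem Wk.mem_earlier (W : Wk G p s m T0 x y U k) {i j : ℕ} (hij : i ≤ j) (hj : j ≤ k) {w : V} (hw : w ∈ U i) (hn : w ∉ U j) :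
    ∃ l, i < l ∧ l ≤ j ∧ w = x l := by
  rcases (W.mem i (by omega) _).1 hw with h | ⟨l, hl, h⟩
  · by_contra hcon
    push Not at hcon
    apply hn
    refine (W.mem j hj _).2 (Or.inl ⟨h.1, fun l hl => ?_⟩)
    by_cases h' : l ≤ i
    · exact h.2 l h'
    · exact hcon l (by omega) hl
  · exact absurd ((W.mem j hj _).2 (Or.inr ⟨l, by omega, h⟩)) hn

theorem Wk.not_mono (W : Wk G p s m T0 x y U k) {i j : ℕ} (hij : i ≤ j) (hj : j ≤ k) {w : V} (hw : w ∉ T0) (hn : w ∉ U j) : w ∉ U i := by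
  intro h
  obtain ⟨l, -, h2, h3⟩ := W.mem_earlier hij hj h hn
  exact hw (h3 ▸ W.xT l (by omega))

def ClA (G : SimpleGraph V) (p : ℕ) (x : ℕ → V) (U : ℕ → Finset V) (i : ℕ) : Prop :=
  ∀ B, Miss G p (U i) B → ∀ j, j < i → x j ∉ B

theorem Wk.prv (C : Cx G p s m) (W : Wk G p s m T0 x y U k) {i j : ℕ} (hij : i < j) (hj : j ≤ k) (hc : ClA G p x U j)
    {B : Finset V} (hB : Miss G p (U j) B) : Prv G p (U i) (x j) B := by
  refine ⟨hB.clq, hB.card, W.yx j hj B hB, ?_⟩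
  intro b hb hbU
  obtain ⟨l, h1, h2, h3⟩ := W.mem_earlier hij.le hj hbU (hB.dis b hb)
  by_cases h : l = j
  · rw [h3, h]
  · exact absurd (h3 ▸ hb) (hc B hB l (by omega))

theorem Wk.F (C : Cx G p s m) (W : Wk G p s m T0 x y U k) {i j : ℕ} (hij : i < j) (hj : j ≤ k) (hc : ClA G p x U j)
    {B : Finset V} (hB : Miss G p (U j) B) {c : V} (cY : Ye G p (U i) c) (cB : c ∈ B) : False := by
  have hU := W.hole i (by omega)
  have P := W.prv C hij hj hc hB
  have yB : y i ∉ B := fun h => hB.dis _ h (W.y_mem hij hj)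
  have xB : x i ∉ B := hc B hB i hij
  have yc : y i ≠ c := fun h => yB (h ▸ cB)
  have yY := W.yy i (by omega)
  obtain ⟨D, hD⟩ := C.block hU cY
  by_cases h : x j ∈ D
  · exact C.clean hU yY cY yc hD h P cB yB
  obtain ⟨A, hA⟩ := C.miss (U := U i) (by have := hU.1; omega)
  have cA := cY A hA
  have xU := W.x_mem hij hj
  have xA : x j ∉ A := fun h => hA.dis _ h xU
  have xi := W.yx i (by omega)
  obtain ⟨e, eB, ez, eA⟩ := cnt4 (A := A) (B := B) (by rw [hA.card, hB.card]) (z := x j) (xi A hA) (yY A hA)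
    (fun h => W.yT i (by omega) (h ▸ W.xT i (by omega))) xB yB
  exact ez (C.extra hA cA hD (hB.clq c cB e eB (fun h => eA (h ▸ cA))) (hB.clq c cB _ P.mem (fun h => xA (h ▸ cA))) eA xA
    (fun h => ez (P.dis e eB (hD.sub h))) h)

theorem Wk.D (C : Cx G p s m) (W : Wk G p s m T0 x y U k) {i j : ℕ} (hij : i < j) (hj : j ≤ k) (hc : ∀ l, l ≤ j → ClA G p x U l)
    {A : Finset V} (hA : Miss G p (U i) A) {u : V} (uY : Ye G p (U j) u) : u ∉ A := by
  intro uA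
  have hU := W.hole i (by omega)
  have hUj := W.hole j hj
  obtain ⟨B, hB⟩ := C.miss (U := U j) (by have := hUj.1; omega)
  have uB := uY B hB
  have yY := W.yy i (by omega)
  by_cases h : Ye G p (U i) u
  · exact W.F C hij hj (hc j le_rfl) hB h uB
  have h0 := h
  unfold Ye at h
  push Not at h
  obtain ⟨A2, hA2, uA2⟩ := h
  have Y : ∀ c ∈ A, c ≠ u → Ye G p (U i) c := fun c cA cu => C.yeor hU yY hA hA2 uA uA2 cA cu
  have yu : y i ≠ u := fun h => h0 (h ▸ yY)
  have yA := yY A hA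
  obtain ⟨D, hD⟩ := C.block hUj uY
  have := C.deg u (((A.erase u).erase (y i)) ∪ ((B.erase u) ∪ D)) (by
    intro w hw
    simp only [Finset.mem_union, Finset.mem_erase] at hw
    rcases hw with hw | hw | hw
    · exact hA.clq u uA w hw.2.2 hw.2.1.symm
    · exact hB.clq u uB w hw.2 hw.1.symm
    · exact hD.adj w hw)
  rw [Finset.card_union_of_disjoint, Finset.card_union_of_disjoint, Finset.card_erase_of_mem (by simp [yA, yu]),
    Finset.card_erase_of_mem uA, Finset.card_erase_of_mem uB, hA.card, hB.card, hD.card] at this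
  · have := C.hp; omega
  · rw [Finset.disjoint_left]
    intro a ha hb
    exact hB.dis a (Finset.mem_of_mem_erase ha) (hD.sub hb)
  · rw [Finset.disjoint_left]
    intro a ha hb
    simp only [Finset.mem_union, Finset.mem_erase] at ha hb
    have aY := Y a ha.2.2 ha.2.1
    rcases hb with hb | hb
    · exact W.F C hij hj (hc j le_rfl) hB aY hb.2
    · obtain ⟨l, h1, h2, h3⟩ := W.mem_later hij.le hj (hD.sub hb) (hA.dis a ha.2.2)
      have hl : i < l := by
        rcases Nat.lt_or_ge i l with h | h
        · exact h
        · exact absurd (by rw [h3, show l = i by omega]) ha.1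
      have hUl := W.hole l (by omega)
      obtain ⟨B', hB'⟩ := C.miss (U := U l) (by have := hUl.1; omega)
      exact W.F C hl (by omega) (hc l (by omega)) hB' aY (h3 ▸ W.yy l (by omega) B' hB')

theorem Wk.A (C : Cx G p s m) (W : Wk G p s m T0 x y U k) : ∀ i, i ≤ k → ClA G p x U i := by
  intro i
  induction i using Nat.strong_induction_on with
  | _ i ih =>
  intro hi B hB j hj hjB
  obtain ⟨c, hcm, hcmax⟩ := Finset.exists_max_image ((Finset.range i).filter (fun c => x c ∈ B)) id ⟨j, by simp [hj, hjB]⟩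
  simp only [Finset.mem_filter, Finset.mem_range, id] at hcm hcmax
  obtain ⟨hci, cB⟩ := hcm
  have hU := W.hole c (by omega)
  have zB := W.yx i hi B hB
  have zU : x i ∈ U c := W.x_mem hci hi
  have P : Prv G p (U c) (x i) B := by
    refine ⟨hB.clq, hB.card, zB, ?_⟩
    intro b hb hbU
    obtain ⟨l, h1, h2, h3⟩ := W.mem_earlier hci.le hi hbU (hB.dis b hb)
    by_cases h : l = i
    · rw [h3, h]
    · have := hcmax l ⟨by omega, h3 ▸ hb⟩
      omega
  have yB : y c ∉ B := fun h => hB.dis _ h (W.y_mem hci hi)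
  have yY := W.yy c (by omega)
  have xY := W.yx c (by omega)
  have nTy : ∀ l, l < k → ∀ l', l' ≤ k → y l ≠ x l' := fun l hl l' hl' h => W.yT l hl (h ▸ W.xT l' hl')
  obtain ⟨D, hD⟩ := C.block hU xY
  have zD : x i ∉ D := fun h => C.clean hU yY xY (nTy _ (by omega) _ (by omega)) hD h P cB yB
  have hBA : ∀ A, Miss G p (U c) A → ∀ b ∈ B, b ≠ x i → b ∈ A := by
    intro A hA b hb hbz
    by_contra bA
    have cA := xY A hA
    have zA : x i ∉ A := fun h => hA.dis _ h zU
    exact hbz (C.extra hA cA hD (hB.clq _ cB b hb (fun h => bA (h ▸ cA))) (hB.clq _ cB _ zB (fun h => zA (h ▸ cA))) bA zA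
      (fun h => hbz (P.dis b hb (hD.sub h))) zD)
  obtain ⟨A, hA⟩ := C.miss (U := U c) (by have := hU.1; omega)
  have yA := yY A hA
  have xA := xY A hA
  have zA : x i ∉ A := fun h => hA.dis _ h zU
  have hAB : ∀ a ∈ A, a ≠ y c → a ∈ B := cnt1 (by rw [hA.card, hB.card]) zB yA
    (fun b hb hbz => ⟨hBA A hA b hb hbz, fun h => yB (h ▸ hb)⟩)
  have Y : ∀ a ∈ A, Ye G p (U c) a := by
    intro a ha A2 hA2
    by_cases h : a = y c
    · exact h ▸ yY A2 hA2
    · exact hBA A2 hA2 a (hAB a ha h) (fun h => zA (h ▸ ha))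
  have zy : ¬ G.Adj (x i) (y c) := by
    intro h
    apply C.nofull hA.clq hA.card zA
    intro a ha
    by_cases h' : a = y c
    · exact h' ▸ h
    · exact hB.clq _ zB a (hAB a ha h') (fun h => zA (h ▸ ha))
  obtain ⟨B', hB', xB'⟩ := C.priv hU xY zU
  have yB' : y c ∉ B' := fun h => zy (hB'.clq _ hB'.mem _ h (nTy _ (by omega) _ hi).symm)
  have dis : ∀ a ∈ B', a ∉ A := by
    intro a aB aA
    have ay : y c ≠ a := fun h => yB' (h ▸ aB)
    have aBB := hAB a aA ay.symm
    obtain ⟨Da, hDa⟩ := C.block hU (Y a aA)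
    by_cases h : x i ∈ Da
    · exact C.clean hU yY (Y a aA) ay hDa h P aBB yB
    obtain ⟨e, eB, ez, eA⟩ := cnt4 (A := A) (B := B') (by rw [hA.card, hB'.card]) (z := x i) xA yA
      (nTy _ (by omega) _ (by omega)).symm xB' yB'
    exact ez (C.extra hA aA hDa (hB'.clq a aB e eB (fun h => eA (h ▸ aA))) (hB'.clq a aB _ hB'.mem (fun h => zA (h ▸ aA))) eA zA
      (fun h => ez (hB'.dis e eB (hDa.sub h))) h)
  have hUi := W.hole i hi
  obtain ⟨Dz, hDz⟩ := C.block hUi (W.yx i hi)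
  have ent : ∀ w ∈ B', w ≠ x i → w ∈ Dz → ∃ l, c < l ∧ l < i ∧ w = y l := by
    intro w hw hwz hwD
    obtain ⟨l, h1, h2, h3⟩ := W.mem_later hci.le hi (hDz.sub hwD) (fun h => hwz (hB'.dis w hw h))
    refine ⟨l, ?_, h2, h3⟩
    rcases Nat.lt_or_ge c l with h | h
    · exact h
    · exact absurd (show y c ∈ B' by rw [show c = l by omega, ← h3]; exact hw) yB'
  have hB'z : ∀ w ∈ B', w ≠ x i → w ∉ B := fun w hw hwz h => dis w hw (hBA A hA w h hwz)
  obtain ⟨w1, hw1, w2, hw2, n12, e1, e2⟩ : ∃ w1 ∈ B', ∃ w2 ∈ B', w1 ≠ w2 ∧ (w1 ≠ x i ∧ w1 ∈ Dz) ∧ (w2 ≠ x i ∧ w2 ∈ Dz) := by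
    obtain ⟨a, ha, b, hb, d, hd, n1, n2, n3⟩ := three (S := B'.erase (x i)) (by
      rw [Finset.card_erase_of_mem hB'.mem, hB'.card]; have := C.hp; omega)
    rw [Finset.mem_erase] at ha hb hd
    have ex : ∀ a ∈ B', a ≠ x i → ∀ b ∈ B', b ≠ x i → a ∉ Dz → b ∉ Dz → a = b := by
      intro a ha ha' b hb hb' h1 h2
      exact C.extra hB zB hDz (hB'.clq _ hB'.mem a ha ha'.symm) (hB'.clq _ hB'.mem b hb hb'.symm) (hB'z a ha ha') (hB'z b hb hb') h1 h2
    by_cases h1 : a ∈ Dz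
    · by_cases h2 : b ∈ Dz
      · exact ⟨a, ha.2, b, hb.2, n1, ⟨ha.1, h1⟩, ⟨hb.1, h2⟩⟩
      · have h3 : d ∈ Dz := by
          by_contra h; exact n3 (ex b hb.2 hb.1 d hd.2 hd.1 h2 h)
        exact ⟨a, ha.2, d, hd.2, n2, ⟨ha.1, h1⟩, ⟨hd.1, h3⟩⟩
    · have h2 : b ∈ Dz := by
        by_contra h; exact n1 (ex a ha.2 ha.1 b hb.2 hb.1 h1 h)
      have h3 : d ∈ Dz := by
        by_contra h; exact n2 (ex a ha.2 ha.1 d hd.2 hd.1 h1 h)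
      exact ⟨b, hb.2, d, hd.2, n3, ⟨hb.1, h2⟩, ⟨hd.1, h3⟩⟩
  obtain ⟨l1, a1, b1, c1⟩ := ent w1 hw1 e1.1 e1.2
  obtain ⟨l2, a2, b2, c2⟩ := ent w2 hw2 e2.1 e2.2
  obtain ⟨l, hlm, hlmin⟩ := Finset.exists_min_image ((Finset.range i).filter (fun l => c < l ∧ y l ∈ B')) id
    ⟨l1, by simp [a1, b1, ← c1, hw1]⟩
  simp only [Finset.mem_filter, Finset.mem_range, id] at hlm hlmin
  obtain ⟨hli, hcl, ylB⟩ := hlm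
  obtain ⟨l', hll', hl'i, yl'B⟩ : ∃ l', l < l' ∧ l' < i ∧ y l' ∈ B' := by
    have m1 := hlmin l1 ⟨b1, a1, c1 ▸ hw1⟩
    have m2 := hlmin l2 ⟨b2, a2, c2 ▸ hw2⟩
    by_cases h : l = l1
    · refine ⟨l2, ?_, b2, c2 ▸ hw2⟩
      rcases Nat.lt_or_ge l l2 with h' | h'
      · exact h'
      · exact absurd (by rw [c1, c2, ← h, show l2 = l by omega]) n12
    · exact ⟨l1, by omega, b1, c1 ▸ hw1⟩
  have hUl := W.hole l (by omega)
  have ylY := W.yy l (by omega)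
  have xlY := W.yx l (by omega)
  have zUl : x i ∈ U l := W.x_mem hli hi
  have P' : Prv G p (U l) (x i) B' := by
    refine ⟨hB'.clq, hB'.card, hB'.mem, ?_⟩
    intro b hb hbU
    by_contra hbz
    obtain ⟨t, h1, h2, h3⟩ := W.mem_later hcl.le (by omega) hbU (fun h => hbz (hB'.dis b hb h))
    rcases Nat.lt_or_ge c t with h | h
    · have := hlmin t ⟨by omega, h, h3 ▸ hb⟩
      omega
    · exact yB' (by rw [show c = t by omega, ← h3]; exact hb)
  have xlB : x l ∉ B' := by
    intro h
    have := W.inj l i (by omega) hi (hB'.dis _ h (W.x_mem hcl (by omega)))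
    omega
  obtain ⟨Dl, hDl⟩ := C.block hUl ylY
  have zDl : x i ∈ Dl := by
    by_contra h
    obtain ⟨Al, hAl⟩ := C.miss (U := U l) (by have := hUl.1; omega)
    have zAl : x i ∉ Al := fun h => hAl.dis _ h zUl
    have yl'Y := W.yy l' (by omega)
    have n1 : y l' ∉ Al := W.D C hll' (by omega) (fun t ht => ih t (by omega) (by omega)) hAl yl'Y
    have n2 : y l' ∉ U l := W.not_mono hll'.le (by omega) (W.yT l' (by omega)) (C.ye_not (W.hole l' (by omega)) yl'Y)
    have n3 : y l ≠ y l' := fun h => n1 (h ▸ ylY Al hAl)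
    exact nTy l' (by omega) i hi (C.extra hAl (ylY Al hAl) hDl (hB'.clq _ ylB _ yl'B n3)
      (hB'.clq _ ylB _ hB'.mem (nTy l (by omega) i hi)) n1 zAl (fun h => n2 (hDl.sub h)) h)
  exact C.clean hUl xlY ylY (nTy l (by omega) l (by omega)).symm hDl zDl P' ylB xlB

theorem Wk.E (C : Cx G p s m) (W : Wk G p s m T0 x y U k) {y' : V} (hy : Ye G p (U k) y') (yT : y' ∉ T0) {i j : ℕ} (hi : i < k) (hj : j < k)
    (hij : G.Adj (y i) (y j)) (h1 : G.Adj y' (y i)) (h2 : G.Adj y' (y j)) : False := by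
  have key : ∀ i j, i < j → j < k → G.Adj (y i) (y j) → G.Adj y' (y i) → False := by
    intro i j hij hj h1 h2
    have hU := W.hole i (by omega)
    obtain ⟨A, hA⟩ := C.miss (U := U i) (by have := hU.1; omega)
    have yiY := W.yy i (by omega)
    have yjY := W.yy j (by omega)
    obtain ⟨D, hD⟩ := C.block hU yiY
    have yk := C.ye_not (W.hole k le_rfl) hy
    have e : y j = y' := C.extra hA (yiY A hA) hD h1 h2.symm
      (W.D C hij (by omega) (fun l hl => W.A C l (by omega)) hA yjY)
      (W.D C (by omega) le_rfl (fun l hl => W.A C l (by omega)) hA hy)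
      (fun h => W.not_mono hij.le (by omega) (W.yT j (by omega)) (C.ye_not (W.hole j (by omega)) yjY) (hD.sub h))
      (fun h => W.not_mono (by omega) le_rfl yT yk (hD.sub h))
    exact yk (e ▸ W.y_mem hj le_rfl)
  rcases Nat.lt_trichotomy i j with h | h | h
  · exact key i j h hj hij h1
  · subst h; exact hij.ne rfl
  · exact key j i h hi hij.symm h2

theorem Wk.exX (C : Cx G p s m) (W : Wk G p s m T0 x y U k) {y' : V} (hy : Ye G p (U k) y') (yT : y' ∉ T0) :
    ∃ x' ∈ T0, ∀ D, Blk G s (U k) y' D → x' ∈ D := by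
  by_contra hcon
  push Not at hcon
  have hU := W.hole k le_rfl
  have hs := C.hs
  obtain ⟨A, hA⟩ := C.miss (U := U k) (by have := hU.1; omega)
  have yA := hy A hA
  obtain ⟨D, hD⟩ := C.block hU hy
  have ent : ∀ w ∈ U k, w ∉ T0 → ∃ i, i < k ∧ w = y i := by
    intro w hw hT
    rcases (W.mem k le_rfl w).1 hw with h | h
    · exact absurd h.1 hT
    · exact h
  have E : ∀ a ∈ U k, a ∉ T0 → ∀ b ∈ U k, b ∉ T0 → G.Adj a b → G.Adj y' a → G.Adj y' b → False := by
    intro a ha ha' b hb hb' h1 h2 h3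
    obtain ⟨i, hi, rfl⟩ := ent a ha ha'
    obtain ⟨j, hj, rfl⟩ := ent b hb hb'
    exact W.E C hy yT hi hj h1 h2 h3
  by_cases hall : ∀ D', Blk G s (U k) y' D' → D' = D
  · have hT : ∀ t ∈ D, t ∉ T0 := by
      intro t ht htT
      obtain ⟨D', h1, h2⟩ := hcon t htT
      exact h2 (hall D' h1 ▸ ht)
    obtain ⟨a, ha, b, hb, hab⟩ := Finset.one_lt_card.1 (show 1 < D.card by rw [hD.card]; omega)
    exact E a (hD.sub ha) (hT a ha) b (hD.sub hb) (hT b hb) (hD.clq a ha b hb hab) (hD.adj a ha) (hD.adj b hb)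
  push Not at hall
  obtain ⟨D2, hD2, hne⟩ := hall
  obtain ⟨w, wD2, wD⟩ : ∃ w ∈ D2, w ∉ D := by
    by_contra h
    push Not at h
    exact hne (Finset.eq_of_subset_of_card_le h (by rw [hD.card, hD2.card]))
  have hN : ∀ u ∈ U k, G.Adj y' u → u ∈ D ∨ u = w := by
    intro u hu hyu
    by_contra h
    push Not at h
    exact h.2 (C.extra hA yA hD hyu (hD2.adj w wD2) (fun h => hA.dis u h hu) (fun h => hA.dis w h (hD2.sub wD2)) h.1 wD)
  obtain ⟨g, gD, gD2⟩ : ∃ g ∈ D, g ∉ D2 := by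
    by_contra h
    push Not at h
    exact hne (Finset.eq_of_subset_of_card_le h (by rw [hD.card, hD2.card])).symm
  have hDD2 : ∀ a ∈ D, a ≠ g → a ∈ D2 := cnt1 (by rw [hD.card, hD2.card]) wD2 gD (by
    intro b hb hbw
    refine ⟨?_, fun h => gD2 (h ▸ hb)⟩
    have := hN b (hD2.sub hb) (hD2.adj b hb)
    tauto)
  have wg : ¬ G.Adj w g := by
    intro h
    refine hU.2 (insert w D) ?_ (clq_insert hD.clq ?_) (by rw [Finset.card_insert_of_notMem wD, hD.card])
    · intro a ha
      rw [Finset.mem_insert] at ha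
      rcases ha with rfl | ha
      · exact hD2.sub wD2
      · exact hD.sub ha
    · intro a ha haw
      by_cases h' : a = g
      · exact h' ▸ h
      · exact hD2.clq w wD2 a (hDD2 a ha h') haw.symm
  have gw : w ≠ g := fun h => wD (h ▸ gD)
  have all2 : ∀ D3, Blk G s (U k) y' D3 → ∀ t ∈ D, t ∈ D2 → t ∈ D3 := by
    intro D3 hD3 t tD tD2
    by_cases h : w ∈ D3
    · have g3 : g ∉ D3 := fun h' => wg (hD3.clq w h g h' gw)
      have := cnt1 (A := D) (B := D3) (by rw [hD.card, hD3.card]) h gD (by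
        intro b hb hbw
        refine ⟨?_, fun h => g3 (h ▸ hb)⟩
        have := hN b (hD3.sub hb) (hD3.adj b hb)
        tauto)
      exact this t tD (fun h => gD2 (h ▸ tD2))
    · have : D3 ⊆ D := by
        intro b hb
        rcases hN b (hD3.sub hb) (hD3.adj b hb) with h' | h'
        · exact h'
        · exact absurd (h' ▸ hb) h
      have := Finset.eq_of_subset_of_card_le this (by rw [hD.card, hD3.card])
      exact this ▸ tD
  have nT : ∀ t ∈ D, t ≠ g → t ∉ T0 := by
    intro t tD tg htT
    obtain ⟨D', h1, h2⟩ := hcon t htT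
    exact h2 (all2 D' h1 t tD (hDD2 t tD tg))
  obtain ⟨h0, h0D, h0g⟩ : ∃ w ∈ D, w ≠ g := Finset.exists_mem_ne (by rw [hD.card]; omega) g
  have h0T := nT h0 h0D h0g
  have h0D2 := hDD2 h0 h0D h0g
  have s2 : s = 2 := by
    by_contra hs'
    have : D ⊆ {h0, g} := by
      intro t ht
      by_contra h'
      simp at h'
      exact E h0 (hD.sub h0D) h0T t (hD.sub ht) (nT t ht h'.2) (hD.clq h0 h0D t ht (Ne.symm h'.1)) (hD.adj _ h0D) (hD.adj _ ht)
    have := (Finset.card_le_card this).trans Finset.card_le_two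
    rw [hD.card] at this
    omega
  have gT : g ∈ T0 := by
    by_contra h
    exact E h0 (hD.sub h0D) h0T g (hD.sub gD) h (hD.clq h0 h0D g gD h0g) (hD.adj _ h0D) (hD.adj _ gD)
  have h0w : h0 ≠ w := fun h => wD (h ▸ h0D)
  have wT : w ∈ T0 := by
    by_contra h
    exact E h0 (hD.sub h0D) h0T w (hD2.sub wD2) h (hD2.clq h0 h0D2 w wD2 h0w) (hD.adj _ h0D) (hD2.adj _ wD2)
  obtain ⟨i, hi, rfl⟩ := ent h0 (hD.sub h0D) h0T
  have hUi := W.hole i (by omega)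
  obtain ⟨Ai, hAi⟩ := C.miss (U := U i) (by have := hUi.1; omega)
  have yiY := W.yy i (by omega)
  obtain ⟨Di, hDi⟩ := C.block hUi yiY
  have yk := C.ye_not hU hy
  have inD : ∀ t ∈ U k, t ∈ T0 → G.Adj (y i) t → t ∈ Di ∧ t ≠ x (i+1) := by
    intro t tU tT ht
    refine ⟨?_, ?_⟩
    · by_contra h
      have tUi : t ∈ U i := by
        by_contra h'
        obtain ⟨l, h1, h2, h3⟩ := W.mem_later hi.le le_rfl tU h'
        exact W.yT l h2 (h3 ▸ tT)
      have : t = y' := C.extra hAi (yiY Ai hAi) hDi ht (hD.adj _ h0D).symm (fun h => hAi.dis t h tUi)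
        (W.D C hi le_rfl (fun l hl => W.A C l (by omega)) hAi hy) h
        (fun h => W.not_mono hi.le le_rfl yT yk (hDi.sub h))
      exact yk (this ▸ tU)
    · intro h
      exact W.x_not (i := i+1) (by omega) le_rfl (h ▸ tU)
  have r1 := inD g (hD.sub gD) gT (hD.clq _ h0D g gD h0g)
  have r2 := inD w (hD2.sub wD2) wT (hD2.clq _ h0D2 w wD2 h0w)
  have r3 := W.xb i hi Di hDi
  have : 2 < Di.card := Finset.two_lt_card.2 ⟨g, r1.1, w, r2.1, _, r3, gw.symm, r1.2, r2.2⟩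
  rw [hDi.card] at this
  omega

theorem Wk.extend (C : Cx G p s m) (W : Wk G p s m T0 x y U k) : ∃ x' y' U', Wk G p s m T0 x' y' U' (k+1) := by
  have hU := W.hole k le_rfl
  obtain ⟨y', hy, hyx⟩ := C.two hU (W.yx k le_rfl)
  have yk := C.ye_not hU hy
  have yT : y' ∉ T0 := by
    intro h
    obtain ⟨A, hA⟩ := C.miss (U := U k) (by have := hU.1; omega)
    have yA := hy A hA
    by_cases h' : ∃ j, j ≤ k ∧ y' = x j
    · obtain ⟨j, hj, e⟩ := h'
      have : j ≠ k := by rintro rfl; exact hyx e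
      exact W.A C k le_rfl A hA j (by omega) (e ▸ yA)
    · push Not at h'
      exact yk ((W.mem k le_rfl _).2 (Or.inl ⟨h, h'⟩))
  obtain ⟨x', xT, hx'⟩ := W.exX C hy yT
  obtain ⟨D, hD⟩ := C.block hU hy
  have xU : x' ∈ U k := hD.sub (hx' D hD)
  have xy : y' ≠ x' := fun h => yT (h ▸ xT)
  have xne : ∀ j, j ≤ k → x' ≠ x j := by
    intro j hj h
    exact W.x_not hj le_rfl (h ▸ xU)
  obtain ⟨U', hU'⟩ : ∃ U', U' = (insert y' (U k)).erase x' := ⟨_, rfl⟩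
  have memU' : ∀ w, w ∈ U' ↔ w ≠ x' ∧ (w = y' ∨ w ∈ U k) := by intro w; simp [hU']
  have hole' : Hole G s m U' := by
    constructor
    · rw [hU', Finset.card_erase_of_mem (Finset.mem_insert_of_mem xU), Finset.card_insert_of_notMem yk]
      have := hU.1; omega
    · intro K hK hKc hKs
      by_cases yK : y' ∈ K
      · have hb : Blk G s (U k) y' (K.erase y') := by
          refine ⟨?_, clq_sub hKc (Finset.erase_subset _ _), by rw [Finset.card_erase_of_mem yK, hKs]; rfl, ?_⟩
          · intro w hw
            rw [Finset.mem_erase] at hw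
            have := (memU' w).1 (hK hw.2)
            tauto
          · intro w hw
            rw [Finset.mem_erase] at hw
            exact hKc y' yK w hw.2 hw.1.symm
        have := Finset.mem_of_mem_erase (hx' _ hb)
        exact ((memU' x').1 (hK this)).1 rfl
      · refine hU.2 K ?_ hKc hKs
        intro w hw
        have := (memU' w).1 (hK hw)
        rcases this.2 with rfl | h
        · exact absurd hw yK
        · exact h
  have xY : Ye G p U' x' := by
    intro A hA
    by_contra h
    have := hy A ⟨hA.clq, hA.card, fun a ha h' => hA.dis a ha ((memU' a).2 ⟨fun e => h (e ▸ ha), Or.inr h'⟩)⟩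
    exact hA.dis y' this ((memU' y').2 ⟨xy, Or.inl rfl⟩)
  refine ⟨fun n => if n = k+1 then x' else x n, fun n => if n = k then y' else y n, fun n => if n = k+1 then U' else U n, ?_, ?_, ?_, ?_, ?_, ?_, ?_, ?_⟩
  · intro i hi
    by_cases h : i = k+1
    · simpa [h] using hole'
    · simpa [h] using W.hole i (by omega)
  · intro i hi
    by_cases h : i = k+1
    · simpa [h] using xY
    · simpa [h] using W.yx i (by omega)
  · intro i hi
    by_cases h : i = k+1
    · simpa [h] using xT
    · simpa [h] using W.xT i (by omega)
  · intro i j hi hj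
    by_cases h : i = k+1 <;> by_cases h' : j = k+1 <;> simp only [h, h', if_true, if_false]
    · first | (intro _; trivial) | (intros; omega) | simp
    · intro e; exact absurd e (xne j (by omega))
    · intro e; exact absurd e.symm (xne i (by omega))
    · intro e; exact W.inj i j (by omega) (by omega) e
  · intro i hi t
    by_cases h : i = k+1
    · subst h
      simp only [if_true]
      rw [memU', W.mem k le_rfl]
      constructor
      · rintro ⟨h1, rfl | ⟨h2, h3⟩ | ⟨j, h2, h3⟩⟩
        · exact Or.inr ⟨k, by omega, by simp⟩
        · refine Or.inl ⟨h2, fun j hj => ?_⟩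
          by_cases h : j = k+1
          · simpa [h] using h1
          · simpa [h] using h3 j (by omega)
        · exact Or.inr ⟨j, by omega, by simpa [show j ≠ k by omega] using h3⟩
      · rintro (⟨h1, h2⟩ | ⟨j, h1, h2⟩)
        · refine ⟨by simpa using h2 (k+1) le_rfl, Or.inr (Or.inl ⟨h1, fun j hj => ?_⟩)⟩
          simpa [show j ≠ k+1 by omega] using h2 j (by omega)
        · by_cases h : j = k
          · simp [h] at h2
            subst h2
            exact ⟨xy, Or.inl rfl⟩
          · simp [h] at h2
            refine ⟨?_, Or.inr (Or.inr ⟨j, by omega, h2⟩)⟩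
            intro e
            exact W.yT j (by omega) (h2 ▸ e ▸ xT)
    · simp only [h, if_false]
      rw [W.mem i (by omega)]
      constructor
      · rintro (⟨h1, h2⟩ | ⟨j, h1, h2⟩)
        · exact Or.inl ⟨h1, fun j hj => by simpa [show j ≠ k+1 by omega] using h2 j hj⟩
        · exact Or.inr ⟨j, h1, by simpa [show j ≠ k by omega] using h2⟩
      · rintro (⟨h1, h2⟩ | ⟨j, h1, h2⟩)
        · exact Or.inl ⟨h1, fun j hj => by simpa [show j ≠ k+1 by omega] using h2 j hj⟩
        · exact Or.inr ⟨j, h1, by simpa [show j ≠ k by omega] using h2⟩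
  · intro i hi
    by_cases h : i = k
    · simpa [h] using yT
    · simpa [h] using W.yT i (by omega)
  · intro i hi
    by_cases h : i = k
    · simpa [h] using hy
    · simpa [h, show i ≠ k+1 by omega] using W.yy i (by omega)
  · intro i hi
    by_cases h : i = k
    · simpa [h] using hx'
    · simpa [h, show i ≠ k+1 by omega] using W.xb i (by omega)

theorem Cx.false (C : Cx G p s m) {U0 : Finset V} (hU : Hole G s m U0) {x0 : V} (hx : Ye G p U0 x0) : False := by
  have hall : ∀ k, ∃ x y U, Wk G p s m (insert x0 U0) x y U k := by
    intro k
    induction k with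
    | zero =>
      have hn := C.ye_not hU hx
      refine ⟨fun _ => x0, fun _ => x0, fun _ => U0, ⟨fun _ _ => hU, fun _ _ => hx, by simp, by intros; omega, ?_, by intros; omega, by intros; omega, by intros; omega⟩⟩
      intro i hi t
      have : i = 0 := by omega
      subst this
      constructor
      · intro h; exact Or.inl ⟨by simp [h], fun j _ e => hn (e ▸ h)⟩
      · rintro (⟨h1, h2⟩ | ⟨j, h1, -⟩)
        · have := h2 0 le_rfl
          simpa [this] using h1
        · omega
    | succ k ih =>
      obtain ⟨x, y, U, W⟩ := ih
      exact W.extend C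
  obtain ⟨x, y, U, W⟩ := hall (insert x0 U0).card
  have := Finset.card_le_card_of_injOn (s := Finset.range ((insert x0 U0).card + 1)) (t := insert x0 U0) x
    (by intro i hi; simp only [Finset.coe_range, Set.mem_Iio] at hi; exact W.xT i (by omega))
    (by intro i hi j hj; simp only [Finset.coe_range, Set.mem_Iio] at hi hj; exact W.inj i j (by omega) (by omega))
  simp only [Finset.card_range] at this
  omega
end TD

set_option linter.unusedSectionVars false
namespace TE
open TD
variable {V : Type*} [DecidableEq V] [Fintype V]

theorem tri_clq {G : SimpleGraph V} {a b c : V} (h1 : G.Adj a b) (h2 : G.Adj a c) (h3 : G.Adj b c) :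
    Clq G {a, b, c} := by
  intro x hx y hy hxy
  have := h1.symm; have := h2.symm; have := h3.symm
  simp only [Finset.mem_insert, Finset.mem_singleton] at hx hy
  rcases hx with rfl | rfl | rfl <;> rcases hy with rfl | rfl | rfl <;> first | assumption | exact absurd rfl hxy

def tset (φ : V → Bool) : Finset V := Finset.univ.filter (fun v => φ v = true)

theorem mem_tset (φ : V → Bool) (v : V) : v ∈ tset φ ↔ φ v = true := by simp [tset]

theorem tset_flip_false {φ : V → Bool} {c : V} (h : φ c = false) :
    (tset (TC.flip c φ)).card = (tset φ).card + 1 := by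
  have : tset (TC.flip c φ) = insert c (tset φ) := by
    ext v
    rw [Finset.mem_insert, mem_tset, mem_tset]
    by_cases e : v = c
    · subst e; simp [TC.flip_same, h]
    · simp [TC.flip_ne φ e, e]
  rw [this, Finset.card_insert_of_notMem]
  rw [mem_tset, h]; simp

theorem tset_flip_true {φ : V → Bool} {c : V} (h : φ c = true) :
    (tset (TC.flip c φ)).card + 1 = (tset φ).card := by
  have : tset (TC.flip c φ) = (tset φ).erase c := by
    ext v
    rw [Finset.mem_erase, mem_tset, mem_tset]
    by_cases e : v = c
    · subst e; simp [TC.flip_same, h]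
    · simp [TC.flip_ne φ e, e]
  rw [this, Finset.card_erase_add_one]
  rw [mem_tset, h]

theorem case33 {G : SimpleGraph V} {m : ℕ}
    (deg : ∀ v (S : Finset V), (∀ x ∈ S, G.Adj v x) → S.card ≤ 5)
    (kfree : ∀ A, Clq G A → A.card ≤ 3)
    (min : ∀ T, Tr G 3 T → m ≤ T.card)
    (ce : ∀ T, Tr G 3 T → T.card = m → ∃ D, D ⊆ T ∧ Clq G D ∧ D.card = 3)
    {U : Finset V} (hU : Hole G 2 m U) {r : V} (hr : Ye G 3 U r) : False := by
  let P : (V → Bool) → Prop := fun φ => (∃ c, TC.Core G φ c) ∧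
    (((tset φ).card + 1 = m ∧ ∀ a b c, TC.Mono G φ a b c → φ a = false) ∨
     ((tset φ).card = m ∧ ∀ a b c, TC.Mono G φ a b c → φ a = true))
  have p1 : ∀ φ, P φ → ∃ a b c, TC.Mono G φ a b c := by
    rintro φ ⟨-, ⟨h1, h2⟩ | ⟨h1, h2⟩⟩
    · by_contra hcon
      have : Tr G 3 (tset φ) := by
        intro A hA hc
        by_contra h
        push Not at h
        obtain ⟨a, b, c, ab, ac, bc, rfl⟩ := Finset.card_eq_three.1 hc
        simp only [mem_tset] at h
        refine hcon ⟨a, b, c, hA _ (by simp) _ (by simp) ab, hA _ (by simp) _ (by simp) ac, hA _ (by simp) _ (by simp) bc, ?_, ?_⟩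
        · have := h a (by simp); have := h b (by simp); simp_all
        · have := h a (by simp); have := h c (by simp); simp_all
      have := min _ this
      omega
    · have : Tr G 3 (tset φ) := by
        intro A hA hc
        by_contra h
        push Not at h
        obtain ⟨a, b, c, ab, ac, bc, rfl⟩ := Finset.card_eq_three.1 hc
        simp only [mem_tset] at h
        refine h a (by simp) (h2 a b c ⟨hA _ (by simp) _ (by simp) ab, hA _ (by simp) _ (by simp) ac, hA _ (by simp) _ (by simp) bc, ?_, ?_⟩)
        · have := h a (by simp); have := h b (by simp); simp_all
        · have := h a (by simp); have := h c (by simp); simp_all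
      obtain ⟨D, hD, hA, hc⟩ := ce _ this h1
      obtain ⟨a, b, c, ab, ac, bc, rfl⟩ := Finset.card_eq_three.1 hc
      have ha := (mem_tset φ a).1 (hD (by simp))
      have hb := (mem_tset φ b).1 (hD (by simp))
      have hc := (mem_tset φ c).1 (hD (by simp))
      exact ⟨a, b, c, hA _ (by simp) _ (by simp) ab, hA _ (by simp) _ (by simp) ac, hA _ (by simp) _ (by simp) bc, by rw [ha, hb], by rw [ha, hc]⟩
  have fl : ∀ (φ : V → Bool) c, TC.Core G φ c → ∀ x y z, TC.Mono G (TC.flip c φ) x y z → TC.flip c φ x = TC.flip c φ c := by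
    intro φ c hc x y z hm
    rcases TC.core_flip hc x y z hm with rfl | rfl | rfl
    · rfl
    · exact hm.2.2.2.1
    · exact hm.2.2.2.2
  have col : ∀ (φ : V → Bool) c β, P φ → TC.Core G φ c → (∀ a b c, TC.Mono G φ a b c → φ a = β) → φ c = β := by
    intro φ c β hP hc h
    obtain ⟨x, y, z, hm⟩ := p1 φ hP
    have h1 := h x y z hm
    obtain ⟨-, -, -, h4, h5⟩ := id hm
    rcases hc x y z hm with rfl | rfl | rfl
    · exact h1
    · rw [← h4, h1]
    · rw [← h5, h1]
  have C : TC.Ctx G P := by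
    refine ⟨?_, ?_, p1, ?_, fun φ h => h.1⟩
    · intro a b c d ab ac ad bc bd cd
      have h : Clq G (insert a {b, c, d}) := by
        apply clq_insert (tri_clq bc bd cd)
        intro x hx _
        simp only [Finset.mem_insert, Finset.mem_singleton] at hx
        rcases hx with rfl | rfl | rfl <;> assumption
      have := kfree _ h
      have hc : (insert a {b, c, d} : Finset V).card = 4 := by
        have := ab.ne; have := ac.ne; have := ad.ne; have := bc.ne; have := bd.ne; have := cd.ne
        rw [Finset.card_insert_of_notMem, Finset.card_insert_of_notMem, Finset.card_pair] <;> simp_all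
      omega
    · intro v a b c d e ha hb hc hd he ab ac ad ae bc bd be cd ce de x hx
      by_contra hcon
      push Not at hcon
      obtain ⟨xa, xb, xc, xd, xe⟩ := hcon
      have := deg v {x, a, b, c, d, e} (by
        intro y hy
        simp only [Finset.mem_insert, Finset.mem_singleton] at hy
        rcases hy with rfl | rfl | rfl | rfl | rfl | rfl <;> assumption)
      have hc : ({x, a, b, c, d, e} : Finset V).card = 6 := by
        rw [Finset.card_insert_of_notMem, Finset.card_insert_of_notMem, Finset.card_insert_of_notMem, Finset.card_insert_of_notMem, Finset.card_pair] <;> simp_all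
      omega
    · intro φ c hP hc
      refine ⟨⟨c, TC.core_flip hc⟩, ?_⟩
      rcases hP.2 with ⟨h1, h2⟩ | ⟨h1, h2⟩
      · right
        have e := col φ c false hP hc h2
        refine ⟨by rw [tset_flip_false e]; exact h1, fun x y z hm => ?_⟩
        rw [fl φ c hc x y z hm, TC.flip_same, e]; rfl
      · left
        have e := col φ c true hP hc h2
        refine ⟨by rw [tset_flip_true e]; exact h1, fun x y z hm => ?_⟩
        rw [fl φ c hc x y z hm, TC.flip_same, e]; rfl
  have tU : tset (fun v => decide (v ∈ U)) = U := by
    ext v; rw [mem_tset]; simp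
  have mf : ∀ a b c, TC.Mono G (fun v => decide (v ∈ U)) a b c → a ∉ U ∧ b ∉ U ∧ c ∉ U := by
    rintro a b c ⟨ab, ac, bc, h4, h5⟩
    simp only [decide_eq_decide] at h4 h5
    by_cases h : a ∈ U
    · exfalso
      refine hU.2 {a, b, c} ?_ (tri_clq ab ac bc) ?_
      · intro x hx
        simp only [Finset.mem_insert, Finset.mem_singleton] at hx
        rcases hx with rfl | rfl | rfl
        · exact h
        · exact h4.1 h
        · exact h5.1 h
      · have := ab.ne; have := ac.ne; have := bc.ne
        exact Finset.card_eq_three.2 ⟨a, b, c, ab.ne, ac.ne, bc.ne, rfl⟩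
    · exact ⟨h, fun h' => h (h4.2 h'), fun h' => h (h5.2 h')⟩
  refine TC.ctx_false C (φ := fun v => decide (v ∈ U)) ⟨⟨r, ?_⟩, Or.inl ⟨by rw [tU]; exact hU.1, ?_⟩⟩
  · intro x y z hm
    obtain ⟨h1, h2, h3⟩ := mf x y z hm
    have := hr {x, y, z} ⟨tri_clq hm.1 hm.2.1 hm.2.2.1, Finset.card_eq_three.2 ⟨x, y, z, hm.1.ne, hm.2.1.ne, hm.2.2.1.ne, rfl⟩, by
      intro a ha
      simp only [Finset.mem_insert, Finset.mem_singleton] at ha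
      rcases ha with rfl | rfl | rfl <;> assumption⟩
    simpa using this
  · intro a b c hm
    simpa using (mf a b c hm).1

def iso (G : SimpleGraph V) (r : V) : SimpleGraph V where
  Adj a b := G.Adj a b ∧ a ≠ r ∧ b ≠ r
  symm := ⟨fun _ _ h => ⟨h.1.symm, h.2.2, h.2.1⟩⟩
  loopless := ⟨fun _ h => G.loopless.irrefl _ h.1⟩

theorem good {p s : ℕ} (hp : 3 ≤ p) (hs : 2 ≤ s) (G : SimpleGraph V)
    (deg : ∀ v (S : Finset V), (∀ x ∈ S, G.Adj v x) → S.card ≤ p + s)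
    (kfree : ∀ A, Clq G A → A.card ≤ p) :
    ∃ T, Tr G p T ∧ (∀ T', Tr G p T' → T.card ≤ T'.card) ∧ ∀ D, D ⊆ T → Clq G D → D.card ≠ s + 1 := by
  induction G using (wellFounded_lt (α := SimpleGraph V)).induction with
  | _ G IH =>
  by_contra hcon
  push Not at hcon
  have huniv : Tr G p Finset.univ := by
    intro A _ hA
    obtain ⟨a, ha⟩ : A.Nonempty := Finset.card_pos.1 (by omega)
    exact ⟨a, ha, Finset.mem_univ _⟩
  obtain ⟨T0, hT0, hmin0⟩ := Set.exists_min_image {T : Finset V | Tr G p T} Finset.card (Set.toFinite _) ⟨_, huniv⟩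
  simp only [Set.mem_setOf_eq] at hT0 hmin0
  have ce : ∀ T, Tr G p T → T.card = T0.card → ∃ D, D ⊆ T ∧ Clq G D ∧ D.card = s + 1 :=
    fun T hT hc => hcon T hT (fun T' h' => hc ▸ hmin0 T' h')
  obtain ⟨D, hD, hDc, hDn⟩ := ce T0 hT0 rfl
  obtain ⟨r, hr, r', hr', hne⟩ := Finset.one_lt_card.1 (show 1 < D.card by omega)
  have hle : iso G r ≤ G := fun a b h => h.1
  have hlt : iso G r < G := by
    refine lt_of_le_of_ne hle (fun e => ?_)
    have h := hDc r hr r' hr' hne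
    rw [← e] at h
    exact h.2.1 rfl
  have mono : ∀ A, Clq (iso G r) A → Clq G A := fun A h a ha b hb ab => (h a ha b hb ab).1
  have mono' : ∀ A, Clq G A → r ∉ A → Clq (iso G r) A := fun A h hn a ha b hb ab =>
    ⟨h a ha b hb ab, fun e => hn (e ▸ ha), fun e => hn (e ▸ hb)⟩
  have rn : ∀ A, Clq (iso G r) A → A.card = p → r ∉ A := by
    intro A h hc hrA
    obtain ⟨b, hb, hbr⟩ := Finset.exists_mem_ne (show 1 < A.card by omega) r
    exact (h r hrA b hb hbr.symm).2.1 rfl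
  obtain ⟨U, hU1, hU2, hU3⟩ := IH _ hlt (fun v S h => deg v S (fun x hx => (h x hx).1)) (fun A h => kfree A (mono A h))
  have hrU : r ∉ U := by
    intro hrU
    have := hU2 (U.erase r) (by
      intro A h hc
      obtain ⟨a, ha, haU⟩ := hU1 A h hc
      exact ⟨a, ha, Finset.mem_erase.2 ⟨fun e => rn A h hc (e ▸ ha), haU⟩⟩)
    have := Finset.card_erase_add_one hrU
    omega
  have hye : Ye G p U r := by
    intro A hA
    by_contra h
    obtain ⟨a, ha, haU⟩ := hU1 A (mono' A hA.clq h) hA.card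
    exact hA.dis a ha haU
  have c1 := hmin0 (insert r U) (by
    intro A h1 h2
    by_contra h3
    push Not at h3
    have := hye A ⟨h1, h2, fun a ha h => h3 a ha (Finset.mem_insert_of_mem h)⟩
    exact h3 r this (Finset.mem_insert_self _ _))
  rw [Finset.card_insert_of_notMem hrU] at c1
  have c2 := hU2 (T0.erase r) (by
    intro A h hc
    obtain ⟨a, ha, haU⟩ := hT0 A (mono A h) hc
    exact ⟨a, ha, Finset.mem_erase.2 ⟨fun e => rn A h hc (e ▸ ha), haU⟩⟩)
  have c3 := Finset.card_erase_add_one (hD hr)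
  have hole : Hole G s T0.card U := ⟨by omega, fun D hD h => hU3 D hD (mono' D h (fun h => hrU (hD h)))⟩
  by_cases h4 : 4 ≤ p
  · exact Cx.false ⟨h4, hs, deg, kfree, hmin0, ce⟩ hole hye
  · obtain rfl : p = 3 := by omega
    have := kfree D hDc
    obtain rfl : s = 2 := by omega
    exact case33 deg kfree hmin0 ce hole hye

end TE

/-- Let `H` be a connected finite simple graph with `Δ(H) ≥ 5`, and let `p, q ≥ 3`
be integers with `ω(H) = p` and `p + q = Δ(H) + 1`. Then there is a subset
`V₁ ⊆ V(H)` which is a `K_p`-free set of maximum cardinality and whose complement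
induces a `K_q`-free subgraph. -/
theorem statement3 {V : Type*} [Fintype V] (H : SimpleGraph V) [DecidableRel H.Adj]
    (hconn : H.Connected) (hΔ : 5 ≤ H.maxDegree)
    (p q : ℕ) (hp : 3 ≤ p) (hq : 3 ≤ q)
    (hω : H.cliqueNum = p) (hpq : p + q = H.maxDegree + 1) :
    ∃ V₁ : Set V, H.CliqueFreeOn V₁ p ∧
      (∀ W : Set V, H.CliqueFreeOn W p → W.ncard ≤ V₁.ncard) ∧
      H.CliqueFreeOn V₁ᶜ q := by
  classical
  have iff : ∀ A : Finset V, TD.Clq H A ↔ H.IsClique (A : Set V) := by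
    intro A
    constructor
    · intro h a ha b hb hab
      exact h a ha b hb hab
    · intro h a ha b hb hab
      exact h ha hb hab
  obtain ⟨T, h1, h2, h3⟩ := TE.good (p := p) (s := q - 1) hp (by omega) H (by
    intro v S hS
    have h : S ⊆ H.neighborFinset v := fun x hx => by
      rw [SimpleGraph.mem_neighborFinset]; exact hS x hx
    have h' := Finset.card_le_card h
    rw [SimpleGraph.card_neighborFinset_eq_degree] at h'
    have := H.degree_le_maxDegree v
    omega) (by
    intro A hA
    rw [← hω]
    exact ((iff A).1 hA).card_le_cliqueNum)
  refine ⟨(T : Set V)ᶜ, ?_, ?_, ?_⟩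
  · intro A hA hcl
    obtain ⟨a, ha, haT⟩ := h1 A ((iff A).2 hcl.isClique) hcl.card_eq
    exact hA ha haT
  · intro W hW
    have := h2 (Finset.univ.filter (· ∉ W)) (by
      intro A hA hc
      by_contra h
      push Not at h
      refine hW (t := A) ?_ ⟨(iff A).1 hA, hc⟩
      intro a ha
      have := h a ha
      simpa using this)
    have e1 : ((Finset.univ.filter (· ∉ W) : Finset V) : Set V) = Wᶜ := by ext; simp
    rw [← Set.ncard_coe_finset, ← Set.ncard_coe_finset, e1] at this
    have a1 := Set.ncard_add_ncard_compl W
    have a2 := Set.ncard_add_ncard_compl (T : Set V)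
    omega
  · intro A hA hcl
    rw [compl_compl] at hA
    refine h3 A hA ((iff A).2 hcl.isClique) ?_
    rw [hcl.card_eq]; omega
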